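/- Let n ≥ 2, R > 0, and let B_R(0) be the open ball of radius R centered at the origin in ℝⁿ. Let u be smooth on the closure of B_R(0) with ∫_{B_R(0)} u dx = 0 and ∂u/∂n = ∂(Δu)/∂n = 0 on ∂B_R(0). Then ∫_{B_R(0)} |Δu|² dx ≥ μ₁(B_R(0))² · ∫_{B_R(0)} |u|² dx, and equality holds if and only if u satisfies Δu = −μ₁(B_R(0))·u in B_R(0). -/

import Mathlib

/-!
An explicit Bessel profile gives, for every direction `e`, a Neumann eigenfunction of one common
eigenvalue `λ > 0` that vanishes only on the hyperplane `e⊥`. By Picone's identity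
`Q(w) = ∫ ‖∇w‖² - λ ∫ w²` is therefore nonnegative on functions that are odd under the reflection
in `e⊥`, so averaging a function with its reflection does not increase `Q`, while it decreases
`∫ w²` unless the function is already symmetric. Minimising `∫ w²` over a compact class of
mean-zero functions with `Q` at most a given value thus produces a radial function, and `Q ≥ 0` is
left to be proved for radial `v` of mean zero.

Such a `v` is the divergence of a field `F(x) = m(x) x` with `m` radial and zero on the sphere. The
components of `F` are odd under reflections, so `λ ∫ ‖F‖² ≤ ∫ (div F)² = ∫ v²`, and expanding
`0 ≤ ∫ ‖∇v + λ F‖²` gives `Q(v) ≥ 0`. Hence `λ ∫ u² ≤ ∫ ‖∇u‖²` for every `u` of mean zero, and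
`μ₁ ≤ λ` because `λ` is a Neumann eigenvalue. With `∫ u Δu = -∫ ‖∇u‖²`, expanding
`0 ≤ ∫ (Δu + μ₁ u)²` proves the bound together with its equality case.
-/

open MeasureTheory Set Metric

noncomputable section

/-- The Laplacian of `f` (sum of second partial derivatives), with all derivatives
taken within the set `S`. -/
def lapWithin {n : ℕ} (S : Set (EuclideanSpace ℝ (Fin n)))
    (f : EuclideanSpace ℝ (Fin n) → ℝ) (x : EuclideanSpace ℝ (Fin n)) : ℝ :=
  ∑ i : Fin n, fderivWithin ℝ
    (fun y => fderivWithin ℝ f S y (EuclideanSpace.single i 1)) S x (EuclideanSpace.single i 1)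

/-- `μ` is a Neumann eigenvalue of the Laplacian on the ball `B_R(0) ⊂ ℝⁿ`: there is a nonzero
function `u`, smooth on the closed ball, with `Δu = −μ·u` in the open ball and vanishing outward
normal (i.e. radial) derivative on the boundary sphere. -/
def IsLapNeumannEigenvalueBall (n : ℕ) (R μ : ℝ) : Prop :=
  ∃ u : EuclideanSpace ℝ (Fin n) → ℝ,
    ContDiffOn ℝ (⊤ : ℕ∞) u (closedBall 0 R) ∧
    (∃ x ∈ closedBall (0 : EuclideanSpace ℝ (Fin n)) R, u x ≠ 0) ∧
    (∀ x ∈ ball (0 : EuclideanSpace ℝ (Fin n)) R,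
      lapWithin (closedBall 0 R) u x = -μ * u x) ∧
    (∀ x : EuclideanSpace ℝ (Fin n), ‖x‖ = R →
      fderivWithin ℝ u (closedBall 0 R) x (‖x‖⁻¹ • x) = 0)

/-- `Υ` is a Neumann eigenvalue of the bi-harmonic operator `Δ²` on the ball `B_R(0) ⊂ ℝⁿ`:
there is a nonzero function `u`, smooth on the closed ball, with `Δ²u = Υ·u` in the open ball and
`∂u/∂n = ∂(Δu)/∂n = 0` on the boundary sphere. -/
def IsBiLapNeumannEigenvalueBall (n : ℕ) (R Υ : ℝ) : Prop :=
  ∃ u : EuclideanSpace ℝ (Fin n) → ℝ,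
    ContDiffOn ℝ (⊤ : ℕ∞) u (closedBall 0 R) ∧
    (∃ x ∈ closedBall (0 : EuclideanSpace ℝ (Fin n)) R, u x ≠ 0) ∧
    (∀ x ∈ ball (0 : EuclideanSpace ℝ (Fin n)) R,
      lapWithin (closedBall 0 R) (lapWithin (closedBall 0 R) u) x = Υ * u x) ∧
    (∀ x : EuclideanSpace ℝ (Fin n), ‖x‖ = R →
      fderivWithin ℝ u (closedBall 0 R) x (‖x‖⁻¹ • x) = 0) ∧
    (∀ x : EuclideanSpace ℝ (Fin n), ‖x‖ = R →
      fderivWithin ℝ (lapWithin (closedBall 0 R) u) (closedBall 0 R) x (‖x‖⁻¹ • x) = 0)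

/-- `Υ` is a Neumann eigenvalue of the even-multi-Laplacian `Δ^(2m)` on the ball `B_R(0) ⊂ ℝⁿ`:
there is a nonzero function `u`, smooth on the closed ball, with `Δ^(2m)u = Υ·u` in the open ball
and `∂(Δʲu)/∂n = 0` on the boundary sphere for every `j = 0, 1, …, 2m−1`. -/
def IsPolyLapNeumannEigenvalueBall (n m : ℕ) (R Υ : ℝ) : Prop :=
  ∃ u : EuclideanSpace ℝ (Fin n) → ℝ,
    ContDiffOn ℝ (⊤ : ℕ∞) u (closedBall 0 R) ∧
    (∃ x ∈ closedBall (0 : EuclideanSpace ℝ (Fin n)) R, u x ≠ 0) ∧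
    (∀ x ∈ ball (0 : EuclideanSpace ℝ (Fin n)) R,
      (lapWithin (closedBall 0 R))^[2 * m] u x = Υ * u x) ∧
    (∀ j < 2 * m, ∀ x : EuclideanSpace ℝ (Fin n), ‖x‖ = R →
      fderivWithin ℝ ((lapWithin (closedBall 0 R))^[j] u) (closedBall 0 R) x (‖x‖⁻¹ • x) = 0)

open Filter Topology
open scoped RealInnerProductSpace NNReal

lemma deriv_smoothTransition_of_nonpos {t : ℝ} (ht : t ≤ 0) :
    deriv Real.smoothTransition t = 0 :=
  IsLocalMin.deriv_eq_zero <| Eventually.of_forall fun s =>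
    (Real.smoothTransition.zero_of_nonpos ht).trans_le (Real.smoothTransition.nonneg s)

lemma deriv_smoothTransition_of_one_le {t : ℝ} (ht : 1 ≤ t) :
    deriv Real.smoothTransition t = 0 :=
  IsLocalMax.deriv_eq_zero <| Eventually.of_forall fun s =>
    (Real.smoothTransition.le_one s).trans_eq (Real.smoothTransition.one_of_one_le ht).symm

lemma continuous_deriv_smoothTransition : Continuous (deriv Real.smoothTransition) :=
  (Real.smoothTransition.contDiff (n := 1)).continuous_deriv le_rfl

lemma exists_abs_deriv_smoothTransition_le : ∃ C, ∀ t, |deriv Real.smoothTransition t| ≤ C :=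
  continuous_deriv_smoothTransition.bounded_above_of_compact_support <|
    .intro (isCompact_Icc (a := (0 : ℝ)) (b := 1)) fun t ht => by
      rcases le_total t 0 with h0 | h0
      · exact deriv_smoothTransition_of_nonpos h0
      · exact deriv_smoothTransition_of_one_le (le_of_not_ge fun h1 => ht ⟨h0, h1⟩)

section Divergence

lemma integrable_of_continuousOn_of_support_subset {X F : Type*} [TopologicalSpace X] [T2Space X]
    [MeasurableSpace X] [OpensMeasurableSpace X] {μ : Measure X} [IsFiniteMeasureOnCompacts μ]
    [NormedAddCommGroup F] {f : X → F} {K : Set X} (hK : IsCompact K) (hf : ContinuousOn f K)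
    (hs : Function.support f ⊆ K) : Integrable f μ :=
  (integrableOn_iff_integrable_of_support_subset hs).1 (hf.integrableOn_compact hK)

variable {E : Type*} [NormedAddCommGroup E]

/-- A smooth cutoff on the ball of radius `R`: it vanishes where `R ^ 2 - ‖x‖ ^ 2 ≤ 1 / k` and
equals `1` where `R ^ 2 - ‖x‖ ^ 2 ≥ 2 / k`. -/
def ballCutoff (R k : ℝ) (x : E) : ℝ :=
  Real.smoothTransition (k * (R ^ 2 - ‖x‖ ^ 2) - 1)

lemma continuous_ballCutoff (R k : ℝ) : Continuous (ballCutoff R k : E → ℝ) :=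
  Real.smoothTransition.continuous.comp (by fun_prop)

lemma tsupport_ballCutoff_subset (R : ℝ) {k : ℝ} (hk : 0 < k) :
    tsupport (ballCutoff R k : E → ℝ) ⊆ ball 0 |R| := by
  have hcl : tsupport (ballCutoff R k : E → ℝ) ⊆ {x | 1 ≤ k * (R ^ 2 - ‖x‖ ^ 2)} := by
    refine closure_minimal (fun x hx => ?_) (isClosed_le (by fun_prop) (by fun_prop))
    by_contra hlt
    exact hx (Real.smoothTransition.zero_of_nonpos (by linarith [not_le.1 (mem_ofPred_eq ▸ hlt)]))
  intro x hx
  have hpos : 0 < R ^ 2 - ‖x‖ ^ 2 := pos_of_mul_pos_right (zero_lt_one.trans_le (hcl hx)) hk.le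
  simpa using sq_lt_sq.1 (sub_pos.1 hpos)

lemma eventually_two_le_mul_sub_norm_sq {R : ℝ} {x : E} (hx : x ∈ ball (0 : E) R) :
    ∀ᶠ k : ℕ in atTop, 2 ≤ ((k : ℝ) + 1) * (R ^ 2 - ‖x‖ ^ 2) := by
  have hpos : 0 < R ^ 2 - ‖x‖ ^ 2 := by
    rw [mem_ball_zero_iff] at hx
    nlinarith [norm_nonneg x]
  exact ((tendsto_natCast_atTop_atTop.atTop_add tendsto_const_nhds).atTop_mul_const
    hpos).eventually_ge_atTop 2

variable [InnerProductSpace ℝ E]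

/-- The gradient of `ballCutoff R k`. -/
def ballCutoffGrad (R k : ℝ) (x : E) : E :=
  (-2 * k * deriv Real.smoothTransition (k * (R ^ 2 - ‖x‖ ^ 2) - 1)) • x

lemma continuous_ballCutoffGrad (R k : ℝ) : Continuous (ballCutoffGrad R k : E → E) :=
  (continuous_const.mul (continuous_deriv_smoothTransition.comp (by fun_prop))).smul continuous_id

lemma hasFDerivAt_ballCutoff (R k : ℝ) (x : E) :
    HasFDerivAt (ballCutoff R k) (innerSL ℝ (ballCutoffGrad R k x)) x := by
  have hinner : HasFDerivAt (fun y : E => k * (R ^ 2 - ‖y‖ ^ 2) - 1)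
      (k • -((2 : ℕ) • innerSL ℝ x)) x :=
    (((hasStrictFDerivAt_norm_sq x).hasFDerivAt.const_sub (R ^ 2)).const_mul k).sub_const 1
  have houter := (Real.smoothTransition.contDiffAt (n := 1)).differentiableAt one_ne_zero
    (x := k * (R ^ 2 - ‖x‖ ^ 2) - 1) |>.hasDerivAt
  refine (houter.comp_hasFDerivAt x hinner).congr_fderiv ?_
  ext v
  simp only [ballCutoffGrad, smul_apply, neg_apply, innerSL_apply_apply, real_inner_smul_left,
    smul_eq_mul, nsmul_eq_mul]
  push_cast
  ring

lemma ballCutoffGrad_eq_zero {R k : ℝ} {x : E} (hx : 2 ≤ k * (R ^ 2 - ‖x‖ ^ 2)) :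
    ballCutoffGrad R k x = 0 := by
  rw [ballCutoffGrad, deriv_smoothTransition_of_one_le (by linarith), mul_zero, zero_smul]

lemma abs_inner_ballCutoffGrad_le {R C M k : ℝ} {x w : E} (hR : 0 < R) (hk : 0 ≤ k)
    (hC : ∀ t, |deriv Real.smoothTransition t| ≤ C) (hx : x ∈ ball (0 : E) R)
    (hw : |⟪w, x⟫| ≤ M * (R - ‖x‖)) : |⟪ballCutoffGrad R k x, w⟫| ≤ 4 * C * M / R := by
  have hxR : 0 < R - ‖x‖ := sub_pos.2 (mem_ball_zero_iff.1 hx)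
  have hM : 0 ≤ M := nonneg_of_mul_nonneg_left ((abs_nonneg _).trans hw) hxR
  have hC0 : 0 ≤ C := (abs_nonneg _).trans (hC 0)
  rcases le_total 2 (k * (R ^ 2 - ‖x‖ ^ 2)) with h2 | h2
  · rw [ballCutoffGrad_eq_zero h2, inner_zero_left, abs_zero]
    positivity
  have hshell : k * (R - ‖x‖) ≤ 2 / R := by
    rw [le_div_iff₀ hR]
    nlinarith [mul_nonneg (mul_nonneg hk hxR.le) (norm_nonneg x)]
  calc |⟪ballCutoffGrad R k x, w⟫|
      = 2 * k * |deriv Real.smoothTransition (k * (R ^ 2 - ‖x‖ ^ 2) - 1)| * |⟪w, x⟫| := by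
        rw [ballCutoffGrad, real_inner_smul_left, real_inner_comm, abs_mul, abs_mul, abs_mul,
          abs_neg, abs_of_nonneg hk, abs_two]
    _ ≤ 2 * k * C * (M * (R - ‖x‖)) := by gcongr; exact hC _
    _ = 2 * C * M * (k * (R - ‖x‖)) := by ring
    _ ≤ 2 * C * M * (2 / R) := by gcongr
    _ = 4 * C * M / R := by ring

lemma gradient_eq_zero_of_notMem_tsupport {η : E → ℝ} {g x : E}
    (hη : HasFDerivAt η (innerSL ℝ g) x) (hx : x ∉ tsupport η) : g = 0 := by
  have hfderiv : fderiv ℝ η x = 0 :=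
    Function.notMem_support.1 fun h => hx (support_fderiv_subset ℝ h)
  rw [← norm_eq_zero, ← innerSL_apply_norm (𝕜 := ℝ), ← hη.fderiv, hfderiv, norm_zero]

variable [FiniteDimensional ℝ E]

lemma continuousOn_trace {X : Type*} [TopologicalSpace X] {A : X → E →L[ℝ] E} {s : Set X}
    (hA : ContinuousOn A s) : ContinuousOn (fun x => LinearMap.trace ℝ E (A x)) s :=
  (LinearMap.trace ℝ E ∘ₗ ContinuousLinearMap.coeLM ℝ).continuous_of_finiteDimensional
    |>.comp_continuousOn hA

variable [MeasurableSpace E] [BorelSpace E]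

lemma integral_mul_trace_eq_neg_integral_inner {η : E → ℝ} {N W : E → E} {W' : E → E →L[ℝ] E}
    (hη : ∀ x, HasFDerivAt η (innerSL ℝ (N x)) x) (hN : Continuous N)
    (hsupp : HasCompactSupport η) (hW : ∀ x ∈ tsupport η, HasFDerivAt W (W' x) x)
    (hW' : ContinuousOn W' (tsupport η)) :
    ∫ x, η x * LinearMap.trace ℝ E (W' x) = -∫ x, ⟪N x, W x⟫ := by
  have hηc : Continuous η := continuous_iff_continuousAt.2 fun x => (hη x).continuousAt
  have hWc : ContinuousOn W (tsupport η) := fun x hx => (hW x hx).continuousAt.continuousWithinAt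
  let b := stdOrthonormalBasis ℝ E
  have hint : ∀ {f : E → ℝ}, ContinuousOn f (tsupport η) → (∀ x ∉ tsupport η, f x = 0) →
      Integrable f := fun hf h0 =>
    integrable_of_continuousOn_of_support_subset hsupp hf (Function.support_subset_iff'.2 h0)
  have hint₁ : ∀ i, Integrable fun x => η x * ⟪b i, W' x (b i)⟫ := fun i =>
    hint (hηc.continuousOn.mul (continuousOn_const.inner (hW'.clm_apply continuousOn_const)))
      fun x hx => by rw [image_eq_zero_of_notMem_tsupport hx, zero_mul]
  have hint₂ : ∀ i, Integrable fun x => ⟪N x, b i⟫ * ⟪b i, W x⟫ := fun i =>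
    hint ((hN.inner continuous_const).continuousOn.mul (continuousOn_const.inner hWc))
      fun x hx => by
        rw [gradient_eq_zero_of_notMem_tsupport (hη x) hx, inner_zero_left, zero_mul]
  have hint₃ : ∀ i, Integrable fun x => η x * ⟪b i, W x⟫ := fun i =>
    hint (hηc.continuousOn.mul (continuousOn_const.inner hWc))
      fun x hx => by rw [image_eq_zero_of_notMem_tsupport hx, zero_mul]
  have ibp : ∀ i, ∫ x, η x * ⟪b i, W' x (b i)⟫ = -∫ x, ⟪N x, b i⟫ * ⟪b i, W x⟫ := fun i =>
    integral_bilinear_hasLineDerivAt_right_eq_neg_left_of_integrable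
      (B := ContinuousLinearMap.mul ℝ ℝ) (hint₂ i) (hint₁ i) (hint₃ i)
      (fun x _ => (hη x).hasLineDerivAt (b i))
      fun x hx => ((innerSL ℝ (b i)).hasFDerivAt.comp x (hW x hx)).hasLineDerivAt (b i)
  calc ∫ x, η x * LinearMap.trace ℝ E (W' x)
      = ∑ i, ∫ x, η x * ⟪b i, W' x (b i)⟫ := by
        rw [← integral_finsetSum _ fun i _ => hint₁ i]
        simp only [LinearMap.trace_eq_sum_inner _ b, Finset.mul_sum, ContinuousLinearMap.coe_coe]
    _ = -∑ i, ∫ x, ⟪N x, b i⟫ * ⟪b i, W x⟫ := by simp only [ibp, Finset.sum_neg_distrib]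
    _ = -∫ x, ⟪N x, W x⟫ := by
        rw [← integral_finsetSum _ fun i _ => hint₂ i]
        simp only [b.sum_inner_mul_inner]

lemma setIntegral_mul_trace_eq_neg_setIntegral_inner {η : E → ℝ} {N W : E → E}
    {W' : E → E →L[ℝ] E} {s : Set E} (hη : ∀ x, HasFDerivAt η (innerSL ℝ (N x)) x)
    (hN : Continuous N) (hsupp : HasCompactSupport η) (hs : tsupport η ⊆ s)
    (hW : ∀ x ∈ s, HasFDerivAt W (W' x) x) (hW' : ContinuousOn W' s) :
    ∫ x in s, η x * LinearMap.trace ℝ E (W' x) = -∫ x in s, ⟪N x, W x⟫ := by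
  rw [setIntegral_eq_integral_of_forall_compl_eq_zero fun x hx => ?_,
    setIntegral_eq_integral_of_forall_compl_eq_zero fun x hx => ?_]
  · exact integral_mul_trace_eq_neg_integral_inner hη hN hsupp (fun x hx => hW x (hs hx))
      (hW'.mono hs)
  · rw [gradient_eq_zero_of_notMem_tsupport (hη x) fun h => hx (hs h), inner_zero_left]
  · rw [image_eq_zero_of_notMem_tsupport fun h => hx (hs h), zero_mul]

lemma tendsto_setIntegral_ballCutoff_mul {R : ℝ} {g : E → ℝ} (hg : IntegrableOn g (ball 0 R)) :
    Tendsto (fun k : ℕ => ∫ x in ball 0 R, ballCutoff R (k + 1) x * g x) atTop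
      (𝓝 (∫ x in ball 0 R, g x)) := by
  refine tendsto_integral_of_dominated_convergence _
    (fun k => (continuous_ballCutoff R _).aestronglyMeasurable.mul hg.aestronglyMeasurable)
    hg.norm (fun k => Eventually.of_forall fun x => ?_) ?_
  · rw [norm_mul, ballCutoff, Real.norm_of_nonneg (Real.smoothTransition.nonneg _)]
    exact mul_le_of_le_one_left (norm_nonneg _) (Real.smoothTransition.le_one _)
  · filter_upwards [ae_restrict_mem measurableSet_ball] with x hx
    refine tendsto_const_nhds.congr' ?_
    filter_upwards [eventually_two_le_mul_sub_norm_sq hx] with k h2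
    rw [ballCutoff, Real.smoothTransition.one_of_one_le (by linarith), one_mul]

lemma tendsto_setIntegral_inner_ballCutoffGrad {R M : ℝ} {W : E → E} (hR : 0 < R)
    (hW : ContinuousOn W (ball 0 R)) (hflux : ∀ x ∈ ball 0 R, |⟪W x, x⟫| ≤ M * (R - ‖x‖)) :
    Tendsto (fun k : ℕ => ∫ x in ball 0 R, ⟪ballCutoffGrad R (k + 1) x, W x⟫) atTop (𝓝 0) := by
  obtain ⟨C, hC⟩ := exists_abs_deriv_smoothTransition_le
  rw [← integral_zero E ℝ (μ := volume.restrict (ball 0 R))]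
  refine tendsto_integral_of_dominated_convergence (fun _ => 4 * C * M / R)
    (fun k => ((continuous_ballCutoffGrad R _).continuousOn.inner hW).aestronglyMeasurable
      measurableSet_ball) (integrableOn_const measure_ball_lt_top.ne) (fun k => ?_) ?_
  · filter_upwards [ae_restrict_mem measurableSet_ball] with x hx
    exact abs_inner_ballCutoffGrad_le hR (by positivity) hC hx (hflux x hx)
  · filter_upwards [ae_restrict_mem measurableSet_ball] with x hx
    refine tendsto_const_nhds.congr' ?_
    filter_upwards [eventually_two_le_mul_sub_norm_sq hx] with k h2
    rw [ballCutoffGrad_eq_zero h2, inner_zero_left]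

theorem integral_trace_ball_eq_zero {R M : ℝ} {W : E → E} {W' : E → E →L[ℝ] E} (hR : 0 < R)
    (hW : ∀ x ∈ ball 0 R, HasFDerivAt W (W' x) x) (hW' : ContinuousOn W' (ball 0 R))
    (hflux : ∀ x ∈ ball 0 R, |⟪W x, x⟫| ≤ M * (R - ‖x‖))
    (hint : IntegrableOn (fun x => LinearMap.trace ℝ E (W' x)) (ball 0 R)) :
    ∫ x in ball 0 R, LinearMap.trace ℝ E (W' x) = 0 := by
  have hWc : ContinuousOn W (ball 0 R) := fun x hx => (hW x hx).continuousAt.continuousWithinAt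
  have hparts : ∀ k : ℕ,
      ∫ x in ball 0 R, ballCutoff R (k + 1) x * LinearMap.trace ℝ E (W' x) =
        -∫ x in ball 0 R, ⟪ballCutoffGrad R (k + 1) x, W x⟫ := fun k => by
    have hsupp : tsupport (ballCutoff R (k + 1) : E → ℝ) ⊆ ball 0 R :=
      (tsupport_ballCutoff_subset R (by positivity)).trans_eq (by rw [abs_of_pos hR])
    have hcomp : HasCompactSupport (ballCutoff R (k + 1) : E → ℝ) :=
      (isCompact_closedBall (0 : E) R).of_isClosed_subset (isClosed_tsupport _)
        (hsupp.trans ball_subset_closedBall)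
    exact setIntegral_mul_trace_eq_neg_setIntegral_inner (hasFDerivAt_ballCutoff R _)
      (continuous_ballCutoffGrad R _) hcomp hsupp hW hW'
  simpa only [neg_zero] using tendsto_nhds_unique (tendsto_setIntegral_ballCutoff_mul hint)
    ((tendsto_setIntegral_inner_ballCutoffGrad hR hWc hflux).neg.congr fun k => (hparts k).symm)

end Divergence

lemma integrableOn_ball_of_continuousOn {X F : Type*} [PseudoMetricSpace X] [ProperSpace X]
    [MeasurableSpace X] [OpensMeasurableSpace X] {μ : Measure X} [IsFiniteMeasureOnCompacts μ]
    [NormedAddCommGroup F] {f : X → F} {x : X} {r : ℝ} (hf : ContinuousOn f (closedBall x r)) :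
    IntegrableOn f (ball x r) μ :=
  (hf.integrableOn_compact' (isCompact_closedBall x r) measurableSet_closedBall).mono_set
    ball_subset_closedBall

section BallCalculus

variable {E F : Type*} [NormedAddCommGroup E] [NormedAddCommGroup F] [NormedSpace ℝ F]

section Normed

variable [NormedSpace ℝ E]

/-- `f` is `C¹` up to the boundary of the ball of radius `R`: it has derivative `f'` in the open
ball, and both are continuous on the closed ball. -/
structure HasFDerivOnBall (R : ℝ) (f : E → F) (f' : E → E →L[ℝ] F) : Prop where
  continuousOn : ContinuousOn f (closedBall 0 R)
  continuousOn_deriv : ContinuousOn f' (closedBall 0 R)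
  hasFDerivAt : ∀ x ∈ ball 0 R, HasFDerivAt f (f' x) x

variable {R : ℝ} {f : E → F} {f' : E → E →L[ℝ] F}

lemma HasFDerivOnBall.of_hasFDerivAt (hf : ∀ x, HasFDerivAt f (f' x) x) (hf' : Continuous f') :
    HasFDerivOnBall R f f' where
  continuousOn x _ := (hf x).continuousAt.continuousWithinAt
  continuousOn_deriv := hf'.continuousOn
  hasFDerivAt x _ := hf x

lemma HasFDerivOnBall.smul {q : E → ℝ} {q' : E → E →L[ℝ] ℝ} (hq : HasFDerivOnBall R q q')
    (hf : HasFDerivOnBall R f f') :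
    HasFDerivOnBall R (fun x => q x • f x) (fun x => q x • f' x + (q' x).smulRight (f x)) where
  continuousOn := hq.continuousOn.smul hf.continuousOn
  continuousOn_deriv := (hq.continuousOn.smul hf.continuousOn_deriv).add
    ((ContinuousLinearMap.smulRightL ℝ E F).continuous₂.comp_continuousOn
      (hq.continuousOn_deriv.prodMk hf.continuousOn))
  hasFDerivAt x hx := (hq.hasFDerivAt x hx).smul (hf.hasFDerivAt x hx)

lemma HasFDerivOnBall.exists_lipschitzOnWith [ProperSpace E] (hf : HasFDerivOnBall R f f')
    (hR : R ≠ 0) : ∃ K, LipschitzOnWith K f (closedBall 0 R) := by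
  obtain ⟨C, hC⟩ := (isCompact_closedBall (0 : E) R).exists_bound_of_continuousOn
    hf.continuousOn_deriv
  have hball : LipschitzOnWith C.toNNReal f (ball 0 R) :=
    (convex_ball 0 R).lipschitzOnWith_of_nnnorm_hasFDerivWithin_le
      (fun x hx => (hf.hasFDerivAt x hx).hasFDerivWithinAt)
      fun x hx => NNReal.le_toNNReal_of_coe_le (hC x (ball_subset_closedBall hx))
  refine ⟨C.toNNReal, ?_⟩
  rw [← closure_ball 0 hR]
  exact hball.closure (by rw [closure_ball 0 hR]; exact hf.continuousOn)

end Normed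

variable [InnerProductSpace ℝ E] {R : ℝ}

lemma abs_inner_le_of_lipschitzOnWith {K : ℝ≥0} {W : E → E}
    (hW : LipschitzOnWith K W (closedBall 0 R)) (h0 : ∀ x, ‖x‖ = R → ⟪W x, x⟫ = 0) {x : E}
    (hx : x ∈ ball 0 R) : |⟪W x, x⟫| ≤ K * R * (R - ‖x‖) := by
  have hxR : ‖x‖ < R := mem_ball_zero_iff.1 hx
  have hR : 0 < R := (norm_nonneg x).trans_lt hxR
  rcases eq_or_ne x 0 with rfl | hx0
  · rw [inner_zero_right, abs_zero, norm_zero, sub_zero]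
    positivity
  have hpos : 0 < ‖x‖ := norm_pos_iff.2 hx0
  set y : E := (R / ‖x‖) • x with hy
  have hyR : ‖y‖ = R := by
    rw [hy, norm_smul, Real.norm_of_nonneg (by positivity), div_mul_cancel₀ _ hpos.ne']
  have hdist : ‖x - y‖ = R - ‖x‖ := by
    rw [show x - y = (1 - R / ‖x‖) • x by rw [hy, sub_smul, one_smul], norm_smul,
      Real.norm_of_nonpos (sub_nonpos.2 ((one_le_div hpos).2 hxR.le))]
    field_simp
    ring
  calc |⟪W x, x⟫| = ‖x‖ / R * |⟪W x - W y, y⟫| := by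
        rw [inner_sub_left, h0 y hyR, sub_zero, hy, real_inner_smul_right, abs_mul,
          abs_of_pos (div_pos hR hpos)]
        field_simp
    _ ≤ 1 * (K * (R - ‖x‖) * R) := by
        gcongr
        · exact (div_le_one hR).2 hxR.le
        · refine (abs_real_inner_le_norm _ _).trans ?_
          rw [hyR, ← hdist]
          gcongr
          exact hW.norm_sub_le (by simpa using hxR.le) (by simpa using hyR.le)
    _ = K * R * (R - ‖x‖) := by ring

/-- `v` has gradient `V` in the ball of radius `R`, both continuous up to the boundary. -/
def HasGradientOnBall (R : ℝ) (v : E → ℝ) (V : E → E) : Prop :=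
  HasFDerivOnBall R v fun x => innerSL ℝ (V x)

variable {v : E → ℝ} {V : E → E}

lemma HasGradientOnBall.continuousOn_gradient (hv : HasGradientOnBall R v V) :
    ContinuousOn V (closedBall 0 R) :=
  (InnerProductSpace.toDualMap ℝ E).isometry.isEmbedding.continuousOn_iff.2 hv.continuousOn_deriv

variable [FiniteDimensional ℝ E] [MeasurableSpace E] [BorelSpace E]

theorem HasFDerivOnBall.integral_trace_eq_zero {W : E → E} {W' : E → E →L[ℝ] E}
    (hW : HasFDerivOnBall R W W') (hR : 0 < R) (h0 : ∀ x, ‖x‖ = R → ⟪W x, x⟫ = 0) :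
    ∫ x in ball 0 R, LinearMap.trace ℝ E (W' x) = 0 := by
  obtain ⟨K, hK⟩ := hW.exists_lipschitzOnWith hR.ne'
  exact integral_trace_ball_eq_zero hR hW.hasFDerivAt
    (hW.continuousOn_deriv.mono ball_subset_closedBall)
    (fun x hx => abs_inner_le_of_lipschitzOnWith hK h0 hx)
    (integrableOn_ball_of_continuousOn (continuousOn_trace hW.continuousOn_deriv))

theorem HasGradientOnBall.integral_mul_trace_eq_neg {W : E → E} {W' : E → E →L[ℝ] E}
    (hv : HasGradientOnBall R v V) (hW : HasFDerivOnBall R W W') (hR : 0 < R)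
    (h0 : ∀ x, ‖x‖ = R → v x * ⟪W x, x⟫ = 0) :
    ∫ x in ball 0 R, v x * LinearMap.trace ℝ E (W' x) = -∫ x in ball 0 R, ⟪V x, W x⟫ := by
  have hzero := (HasFDerivOnBall.smul hv hW).integral_trace_eq_zero hR fun x hx => by
    rw [real_inner_smul_left, h0 x hx]
  have htrace : ∀ x, LinearMap.trace ℝ E
      (v x • W' x + (innerSL ℝ (V x)).smulRight (W x) : E →L[ℝ] E) =
        v x * LinearMap.trace ℝ E (W' x) + ⟪V x, W x⟫ := fun x => by
    simp [LinearMap.trace_smulRight]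
  have hint₁ : IntegrableOn (fun x => v x * LinearMap.trace ℝ E (W' x)) (ball 0 R) :=
    integrableOn_ball_of_continuousOn
      (hv.continuousOn.mul (continuousOn_trace hW.continuousOn_deriv))
  have hint₂ : IntegrableOn (fun x => ⟪V x, W x⟫) (ball 0 R) :=
    integrableOn_ball_of_continuousOn (hv.continuousOn_gradient.inner hW.continuousOn)
  simp only [htrace] at hzero
  rw [integral_add hint₁ hint₂] at hzero
  exact eq_neg_of_add_eq_zero_left hzero

end BallCalculus

section Picone

variable {E : Type*} [NormedAddCommGroup E] [InnerProductSpace ℝ E] {R : ℝ}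

lemma HasGradientOnBall.mk {v : E → ℝ} {V : E → E} (hv : ContinuousOn v (closedBall 0 R))
    (hV : ContinuousOn V (closedBall 0 R))
    (hderiv : ∀ x ∈ ball 0 R, HasFDerivAt v (innerSL ℝ (V x)) x) : HasGradientOnBall R v V :=
  ⟨hv, (innerSL ℝ).continuous.comp_continuousOn hV, hderiv⟩

variable {v w : E → ℝ} {V W : E → E}

lemma HasGradientOnBall.mul (hv : HasGradientOnBall R v V) (hw : HasGradientOnBall R w W) :
    HasGradientOnBall R (fun x => v x * w x) fun x => v x • W x + w x • V x :=
  .mk (hv.continuousOn.mul hw.continuousOn)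
    ((hv.continuousOn.smul hw.continuousOn_gradient).add
      (hw.continuousOn.smul hv.continuousOn_gradient))
    fun x hx => ((hv.hasFDerivAt x hx).mul (hw.hasFDerivAt x hx)).congr_fderiv (by simp)

lemma HasGradientOnBall.comp (hv : HasGradientOnBall R v V) {ψ ψ' : ℝ → ℝ}
    (hψ : ∀ s, HasDerivAt ψ (ψ' s) s) (hψ' : Continuous ψ') :
    HasGradientOnBall R (fun x => ψ (v x)) fun x => ψ' (v x) • V x :=
  .mk ((continuous_iff_continuousAt.2 fun s => (hψ s).continuousAt).comp_continuousOn
      hv.continuousOn)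
    ((hψ'.comp_continuousOn hv.continuousOn).smul hv.continuousOn_gradient)
    fun x hx => ((hψ (v x)).comp_hasFDerivAt x (hv.hasFDerivAt x hx)).congr_fderiv (by simp)

/-- `φ`, with gradient `G` and Hessian `H`, solves `Δφ = -lam φ` in the ball of radius `R` with
vanishing normal derivative on the sphere. -/
structure IsNeumannMode (R lam : ℝ) (φ : E → ℝ) (G : E → E) (H : E → E →L[ℝ] E) : Prop where
  hasGradientOnBall : HasGradientOnBall R φ G
  hasFDerivOnBall : HasFDerivOnBall R G H
  trace_eq : ∀ x ∈ ball 0 R, LinearMap.trace ℝ E (H x) = -lam * φ x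
  inner_eq_zero : ∀ x, ‖x‖ = R → ⟪G x, x⟫ = 0

variable [FiniteDimensional ℝ E] [MeasurableSpace E] [BorelSpace E] {lam : ℝ} {φ : E → ℝ}
  {G : E → E} {H : E → E →L[ℝ] E}

lemma IsNeumannMode.mul_integral_comp_le (hφ : IsNeumannMode R lam φ G H) (hR : 0 < R)
    (hw : HasGradientOnBall R w W) {ψ ψ' : ℝ → ℝ} (hψ : ∀ s, HasDerivAt ψ (ψ' s) s)
    (hψ' : Continuous ψ') :
    lam * ∫ x in ball 0 R, w x ^ 2 * (φ x * ψ (φ x)) ≤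
      (∫ x in ball 0 R, ‖W x‖ ^ 2) +
        ∫ x in ball 0 R, w x ^ 2 * (ψ' (φ x) + ψ (φ x) ^ 2) * ‖G x‖ ^ 2 := by
  have hcψ : ContinuousOn (fun x => ψ (φ x)) (closedBall 0 R) :=
    (hφ.hasGradientOnBall.comp hψ hψ').continuousOn
  have hcψ' : ContinuousOn (fun x => ψ' (φ x)) (closedBall 0 R) :=
    hψ'.comp_continuousOn hφ.hasGradientOnBall.continuousOn
  have hcW := hw.continuousOn_gradient
  have hcG := hφ.hasGradientOnBall.continuousOn_gradient
  have hq := (hw.mul hw).mul (hφ.hasGradientOnBall.comp hψ hψ')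
  have hgreen := hq.integral_mul_trace_eq_neg hφ.hasFDerivOnBall hR fun x hx => by
    rw [hφ.inner_eq_zero x hx, mul_zero]
  calc lam * ∫ x in ball 0 R, w x ^ 2 * (φ x * ψ (φ x))
      = -∫ x in ball 0 R, w x * w x * ψ (φ x) * LinearMap.trace ℝ E (H x) := by
        rw [← integral_const_mul, ← integral_neg]
        refine setIntegral_congr_fun measurableSet_ball fun x hx => ?_
        simp only [hφ.trace_eq x hx]
        ring
    _ = ∫ x in ball 0 R,
          ⟪(w x * w x) • ψ' (φ x) • G x + ψ (φ x) • (w x • W x + w x • W x), G x⟫ := by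
        rw [hgreen, neg_neg]
    _ ≤ ∫ x in ball 0 R, (‖W x‖ ^ 2 + w x ^ 2 * (ψ' (φ x) + ψ (φ x) ^ 2) * ‖G x‖ ^ 2) := by
        refine setIntegral_mono_on ?_ ?_ measurableSet_ball fun x _ => ?_
        · exact integrableOn_ball_of_continuousOn (hq.continuousOn_gradient.inner hcG)
        · exact integrableOn_ball_of_continuousOn ((hcW.norm.pow 2).add
            (((hw.continuousOn.pow 2).mul (hcψ'.add (hcψ.pow 2))).mul (hcG.norm.pow 2)))
        · have hsq := sq_nonneg ‖W x - (w x * ψ (φ x)) • G x‖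
          rw [norm_sub_sq_real, norm_smul, real_inner_smul_right, mul_pow, Real.norm_eq_abs,
            sq_abs] at hsq
          simp only [inner_add_left, real_inner_smul_left, real_inner_self_eq_norm_sq]
          linarith
    _ = _ := integral_add (integrableOn_ball_of_continuousOn (hcW.norm.pow 2))
        (integrableOn_ball_of_continuousOn
          (((hw.continuousOn.pow 2).mul (hcψ'.add (hcψ.pow 2))).mul (hcG.norm.pow 2)))

lemma hasDerivAt_div_sq_add {δ : ℝ} (hδ : 0 < δ) (s : ℝ) :
    HasDerivAt (fun s => s / (s ^ 2 + δ)) (δ / (s ^ 2 + δ) ^ 2 - (s / (s ^ 2 + δ)) ^ 2) s := by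
  have hne : s ^ 2 + δ ≠ 0 := by positivity
  refine ((hasDerivAt_id s).div (((hasDerivAt_id s).pow 2).add_const δ) hne).congr_deriv ?_
  simp only [Pi.pow_apply, id_eq]
  field_simp
  ring

lemma IsNeumannMode.mul_integral_sq_div_le (hφ : IsNeumannMode R lam φ G H) (hR : 0 < R)
    (hw : HasGradientOnBall R w W) {δ : ℝ} (hδ : 0 < δ) :
    lam * ∫ x in ball 0 R, w x ^ 2 * (φ x ^ 2 / (φ x ^ 2 + δ)) ≤
      (∫ x in ball 0 R, ‖W x‖ ^ 2) +
        ∫ x in ball 0 R, w x ^ 2 * (δ / (φ x ^ 2 + δ) ^ 2) * ‖G x‖ ^ 2 := by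
  have hne : ∀ s : ℝ, s ^ 2 + δ ≠ 0 := fun s => by positivity
  simpa only [sub_add_cancel, ← mul_div_assoc, ← sq] using
    hφ.mul_integral_comp_le hR hw (hasDerivAt_div_sq_add hδ) (by fun_prop (disch := simp [hne]))

lemma div_sq_add_le_one {s δ : ℝ} (hδ : 0 < δ) : s ^ 2 / (s ^ 2 + δ) ≤ 1 :=
  (div_le_one (by positivity)).2 (by linarith)

lemma sq_mul_div_sq_add_sq_le_one {s δ : ℝ} (hδ : 0 < δ) : s ^ 2 * (δ / (s ^ 2 + δ) ^ 2) ≤ 1 := by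
  rw [← mul_div_assoc, div_le_one (by positivity)]
  nlinarith [sq_nonneg (s ^ 2), mul_nonneg (sq_nonneg s) hδ.le, sq_nonneg δ]

lemma tendsto_div_add_one_div_nat {a : ℝ} (ha : a ≠ 0) :
    Tendsto (fun k : ℕ => a / (a + 1 / (k + 1))) atTop (𝓝 1) := by
  have hden := (tendsto_one_div_add_atTop_nhds_zero_nat (𝕜 := ℝ)).const_add a
  rw [add_zero] at hden
  have hquot : Tendsto (fun k : ℕ => a / (a + 1 / (k + 1))) atTop (𝓝 (a / a)) :=
    tendsto_const_nhds.div hden ha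
  rwa [div_self ha] at hquot

lemma tendsto_setIntegral_mul_sq_div {K : ℝ} (hw : ContinuousOn w (closedBall 0 R))
    (hφ : ContinuousOn φ (closedBall 0 R)) (hK : ∀ x ∈ ball 0 R, |w x| ≤ K * |φ x|) :
    Tendsto (fun k : ℕ => ∫ x in ball 0 R, w x ^ 2 * (φ x ^ 2 / (φ x ^ 2 + 1 / (k + 1))))
      atTop (𝓝 (∫ x in ball 0 R, w x ^ 2)) := by
  refine tendsto_integral_of_dominated_convergence _ (fun k => ?_)
    (integrableOn_ball_of_continuousOn (hw.pow 2)) (fun k => ?_) ?_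
  · refine (ContinuousOn.mono ?_ ball_subset_closedBall).aestronglyMeasurable measurableSet_ball
    exact (hw.pow 2).mul ((hφ.pow 2).div ((hφ.pow 2).add continuousOn_const)
      fun x _ => by positivity)
  · refine Eventually.of_forall fun x => ?_
    rw [Real.norm_of_nonneg (by positivity)]
    exact mul_le_of_le_one_right (sq_nonneg _) (div_sq_add_le_one Nat.one_div_pos_of_nat)
  · filter_upwards [ae_restrict_mem measurableSet_ball] with x hx
    rcases eq_or_ne (φ x) 0 with h0 | h0
    · have hw0 : w x = 0 := by simpa [h0] using hK x hx
      simp [hw0]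
    · simpa using (tendsto_div_add_one_div_nat (pow_ne_zero 2 h0)).const_mul (w x ^ 2)

lemma tendsto_setIntegral_sq_mul_div_mul {K : ℝ} {g : E → ℝ} (hw : ContinuousOn w (closedBall 0 R))
    (hφ : ContinuousOn φ (closedBall 0 R)) (hg : ContinuousOn g (closedBall 0 R))
    (hK : ∀ x ∈ ball 0 R, |w x| ≤ K * |φ x|) :
    Tendsto (fun k : ℕ => ∫ x in ball 0 R,
      w x ^ 2 * (1 / (k + 1) / (φ x ^ 2 + 1 / (k + 1)) ^ 2) * g x) atTop (𝓝 0) := by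
  rw [← integral_zero E ℝ (μ := volume.restrict (ball 0 R))]
  refine tendsto_integral_of_dominated_convergence (fun x => K ^ 2 * |g x|) (fun k => ?_)
    (integrableOn_ball_of_continuousOn (hg.abs.const_mul _)) (fun k => ?_) ?_
  · refine (ContinuousOn.mono ?_ ball_subset_closedBall).aestronglyMeasurable measurableSet_ball
    have hne : ∀ x ∈ closedBall 0 R, (φ x ^ 2 + 1 / ((k : ℝ) + 1)) ^ 2 ≠ 0 :=
      fun x _ => by positivity
    exact ((hw.pow 2).mul
      (continuousOn_const.div (((hφ.pow 2).add continuousOn_const).pow 2) hne)).mul hg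
  · filter_upwards [ae_restrict_mem measurableSet_ball] with x hx
    rw [norm_mul, Real.norm_of_nonneg (by positivity), Real.norm_eq_abs]
    gcongr
    calc w x ^ 2 * (1 / (k + 1) / (φ x ^ 2 + 1 / (k + 1)) ^ 2)
        ≤ (K * |φ x|) ^ 2 * (1 / (k + 1) / (φ x ^ 2 + 1 / (k + 1)) ^ 2) := by
          rw [← sq_abs (w x)]
          gcongr
          exact hK x hx
      _ = K ^ 2 * (φ x ^ 2 * (1 / (k + 1) / (φ x ^ 2 + 1 / (k + 1)) ^ 2)) := by
          rw [mul_pow, sq_abs, mul_assoc]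
      _ ≤ K ^ 2 := mul_le_of_le_one_right (sq_nonneg K)
          (sq_mul_div_sq_add_sq_le_one Nat.one_div_pos_of_nat)
  · filter_upwards [ae_restrict_mem measurableSet_ball] with x hx
    rcases eq_or_ne (φ x) 0 with h0 | h0
    · have hw0 : w x = 0 := by simpa [h0] using hK x hx
      simp [hw0]
    · have hlim := tendsto_one_div_add_atTop_nhds_zero_nat (𝕜 := ℝ)
      have hquot := hlim.div ((hlim.const_add (φ x ^ 2)).pow 2) (by simpa using h0)
      simpa using (hquot.const_mul (w x ^ 2)).mul_const (g x)

theorem IsNeumannMode.mul_integral_sq_le_of_abs_le (hφ : IsNeumannMode R lam φ G H) (hR : 0 < R)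
    (hw : HasGradientOnBall R w W) {K : ℝ} (hK : ∀ x ∈ ball 0 R, |w x| ≤ K * |φ x|) :
    lam * ∫ x in ball 0 R, w x ^ 2 ≤ ∫ x in ball 0 R, ‖W x‖ ^ 2 := by
  have hmain := tendsto_setIntegral_mul_sq_div hw.continuousOn hφ.hasGradientOnBall.continuousOn hK
  have herror := tendsto_setIntegral_sq_mul_div_mul hw.continuousOn
    hφ.hasGradientOnBall.continuousOn
    (hφ.hasGradientOnBall.continuousOn_gradient.norm.pow 2) hK
  simpa using le_of_tendsto_of_tendsto' (hmain.const_mul lam) (herror.const_add _)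
    fun k => hφ.mul_integral_sq_div_le hR hw Nat.one_div_pos_of_nat

end Picone

lemma exists_first_zero_of_continuousOn {g : ℝ → ℝ} {a b : ℝ} (hg : ContinuousOn g (Icc a b))
    (hab : a ≤ b) (ha : 0 < g a) (hb : g b ≤ 0) :
    ∃ t ∈ Ioc a b, g t = 0 ∧ ∀ s ∈ Ico a t, 0 < g s := by
  obtain ⟨t, ⟨ht, htle⟩, hmin⟩ := (isCompact_Icc.of_isClosed_subset
    (hg.preimage_isClosed_of_isClosed isClosed_Icc isClosed_Iic) inter_subset_left).exists_isLeast
      ⟨b, ⟨hab, le_rfl⟩, hb⟩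
  obtain ⟨s, hs, hs0⟩ := intermediate_value_Icc' ht.1 (hg.mono (Icc_subset_Icc_right ht.2))
    ⟨htle, ha.le⟩
  obtain rfl : s = t := hs.2.antisymm (hmin ⟨⟨hs.1, hs.2.trans ht.2⟩, hs0.le⟩)
  refine ⟨s, ⟨hs.1.lt_of_ne fun h => ha.ne' (h ▸ hs0), ht.2⟩, hs0, fun r hr => ?_⟩
  by_contra! hle
  exact hr.2.not_ge (hmin ⟨⟨hr.1, hr.2.le.trans ht.2⟩, hle⟩)

section Bessel

/-- `f` is the sum of the power series with coefficients `a` on the whole real line. -/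
def HasEntireSeries (a : ℕ → ℝ) (f : ℝ → ℝ) : Prop :=
  ∀ t, HasSum (fun k => a k * t ^ k) (f t)

variable {a : ℕ → ℝ} {f : ℝ → ℝ}

lemma exists_hasEntireSeries_of_abs_le (ha : ∀ k, |a k| ≤ (k.factorial : ℝ)⁻¹) :
    ∃ f, HasEntireSeries a f := by
  refine ⟨_, fun t => (Summable.of_norm_bounded (Real.summable_pow_div_factorial |t|)
    fun k => ?_).hasSum⟩
  rw [norm_mul, norm_pow, Real.norm_eq_abs, Real.norm_eq_abs, div_eq_inv_mul]
  gcongr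
  exact ha k

lemma HasEntireSeries.hasFPowerSeriesOnBall (hf : HasEntireSeries a f) :
    HasFPowerSeriesOnBall f (.ofScalars ℝ a) 0 ⊤ where
  r_le := top_le_iff.2 <| ENNReal.eq_top_of_forall_nnreal_le fun r =>
    FormalMultilinearSeries.le_radius_of_tendsto _ (l := 0) <| by
      simpa [FormalMultilinearSeries.ofScalars_norm] using
        (hf r).summable.tendsto_atTop_zero.norm
  r_pos := ENNReal.zero_lt_top
  hasSum {t} _ := by
    simpa [FormalMultilinearSeries.ofScalars_apply_eq, mul_comm] using hf t

lemma HasEntireSeries.contDiff (hf : HasEntireSeries a f) {m : WithTop ℕ∞} : ContDiff ℝ m f :=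
  AnalyticOnNhd.contDiff fun _ _ => hf.hasFPowerSeriesOnBall.analyticAt_of_mem (by simp)

lemma HasEntireSeries.deriv (hf : HasEntireSeries a f) :
    HasEntireSeries (fun k => (k + 1) * a (k + 1)) (deriv f) := fun t => by
  have hsum := (hf.hasFPowerSeriesOnBall.fderiv.hasSum (y := t) (by simp)).mapL
    (ContinuousLinearMap.apply ℝ ℝ (1 : ℝ))
  simpa [FormalMultilinearSeries.apply_eq_pow_smul_coeff,
    FormalMultilinearSeries.derivSeries_coeff_one, mul_comm] using hsum

lemma HasEntireSeries.id_mul_deriv (hf : HasEntireSeries a f) :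
    HasEntireSeries (fun k => k * a k) (fun t => t * _root_.deriv f t) := fun t => by
  refine (hasSum_nat_add_iff' 1).1 ?_
  simpa [pow_succ', mul_assoc, mul_left_comm] using (hf.deriv t).mul_left t

/-- `f (r ^ 2)` is the multiple of `r ^ (-d / 2) * J_{d / 2} r`, with `J` the Bessel function of the
first kind, equal to `1` at the origin; thus `⟪e, x⟫ * f (lam * ‖x‖ ^ 2)` solves
`Δφ = -lam φ` in dimension `d`. -/
structure IsBesselProfile (d : ℝ) (f : ℝ → ℝ) : Prop where
  contDiff : ContDiff ℝ (⊤ : ℕ∞) f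
  map_zero : f 0 = 1
  ode : ∀ t, 4 * t * deriv (deriv f) t + (2 * d + 4) * deriv f t + f t = 0

/-- The Taylor coefficients of the Bessel profile in dimension `d`, from the recursion imposed by
its differential equation. -/
def besselCoeff (d : ℝ) : ℕ → ℝ
  | 0 => 1
  | k + 1 => -besselCoeff d k / ((k + 1) * (4 * k + 2 * d + 4))

variable {d : ℝ}

lemma abs_besselCoeff_le (hd : 0 ≤ d) (k : ℕ) : |besselCoeff d k| ≤ (k.factorial : ℝ)⁻¹ := by
  induction k with
  | zero => simp [besselCoeff]
  | succ k ih =>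
    have hden : (k + 1 : ℝ) ≤ (k + 1) * (4 * k + 2 * d + 4) :=
      le_mul_of_one_le_right (by positivity) (by linarith [k.cast_nonneg (α := ℝ)])
    rw [besselCoeff, abs_div, abs_neg, abs_of_pos ((Nat.cast_add_one_pos k).trans_le hden),
      Nat.factorial_succ, Nat.cast_mul, mul_inv, div_eq_inv_mul, Nat.cast_succ]
    gcongr

theorem exists_isBesselProfile (hd : 0 ≤ d) : ∃ f, IsBesselProfile d f := by
  obtain ⟨f, hf⟩ := exists_hasEntireSeries_of_abs_le (abs_besselCoeff_le hd)
  refine ⟨f, hf.contDiff, ?_, fun t => ?_⟩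
  · refine (hf 0).unique ?_
    simpa [besselCoeff] using hasSum_single (f := fun k => besselCoeff d k * 0 ^ k) 0
      fun k hk => by simp [hk]
  · have hsum := (((hf.deriv.id_mul_deriv t).mul_left 4).add
      ((hf.deriv t).mul_left (2 * d + 4))).add (hf t)
    rw [mul_assoc]
    refine hsum.unique (hasSum_zero.congr_fun fun k => ?_)
    have : (k + 1 : ℝ) * (4 * k + 2 * d + 4) ≠ 0 := by positivity
    simp only [besselCoeff]
    field_simp
    ring

namespace IsBesselProfile

variable (hf : IsBesselProfile d f)
include hf

lemma contDiff_deriv : ContDiff ℝ (⊤ : ℕ∞) (deriv f) := (contDiff_infty_iff_deriv.1 hf.contDiff).2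

lemma hasDerivAt (t : ℝ) : HasDerivAt f (deriv f t) t :=
  (hf.contDiff.differentiable (by simp) t).hasDerivAt

lemma hasDerivAt_deriv (t : ℝ) : HasDerivAt (deriv f) (deriv (deriv f) t) t :=
  (hf.contDiff_deriv.differentiable (by simp) t).hasDerivAt

lemma hasDerivAt_mul_comp_sq (r : ℝ) :
    HasDerivAt (fun r => r * f (r ^ 2)) (f (r ^ 2) + 2 * r ^ 2 * deriv f (r ^ 2)) r := by
  refine ((hasDerivAt_id r).mul ((hf.hasDerivAt _).comp r (hasDerivAt_pow 2 r))).congr_deriv ?_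
  simp only [Function.comp_apply, id]
  push_cast
  ring

lemma hasDerivAt_add_two_mul_deriv (t : ℝ) :
    HasDerivAt (fun t => f t + 2 * t * deriv f t) (-f t / 2 - (d - 1) * deriv f t) t := by
  refine ((hf.hasDerivAt t).add
    (((hasDerivAt_id t).const_mul 2).mul (hf.hasDerivAt_deriv t))).congr_deriv ?_
  simp only [id]
  linear_combination hf.ode t / 2

lemma strictMonoOn_mul_comp_sq {r : ℝ}
    (hpos : ∀ s ∈ Ioo 0 r, 0 < f (s ^ 2) + 2 * s ^ 2 * deriv f (s ^ 2)) :
    StrictMonoOn (fun s => s * f (s ^ 2)) (Icc 0 r) :=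
  strictMonoOn_of_deriv_pos (convex_Icc 0 r)
    (fun s _ => (hf.hasDerivAt_mul_comp_sq s).continuousAt.continuousWithinAt) fun s hs => by
      rw [interior_Icc] at hs
      rw [(hf.hasDerivAt_mul_comp_sq s).deriv]
      exact hpos s hs

lemma pos_of_forall_add_two_mul_deriv_pos {T : ℝ}
    (hpos : ∀ t ∈ Ico 0 T, 0 < f t + 2 * t * deriv f t) : ∀ t ∈ Icc 0 T, 0 < f t := by
  rintro t ⟨ht0, htT⟩
  rcases ht0.eq_or_lt with rfl | ht
  · rw [hf.map_zero]
    exact one_pos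
  have hmono : StrictMonoOn (fun s => s * f (s ^ 2)) (Icc 0 √t) :=
    hf.strictMonoOn_mul_comp_sq fun s hs =>
      hpos _ ⟨sq_nonneg s, ((Real.lt_sqrt hs.1.le).1 hs.2).trans_le htT⟩
  have hlt := hmono (left_mem_Icc.2 t.sqrt_nonneg) (right_mem_Icc.2 t.sqrt_nonneg)
    (Real.sqrt_pos.2 ht)
  simp only [zero_mul, Real.sq_sqrt ht0] at hlt
  exact pos_of_mul_pos_right hlt t.sqrt_nonneg

lemma exists_add_two_mul_deriv_nonpos (hd : 1 ≤ d) : ∃ t, 0 ≤ t ∧ f t + 2 * t * deriv f t ≤ 0 := by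
  by_contra! hpos
  have hfpos : ∀ t, 0 ≤ t → 0 < f t := fun t ht =>
    hf.pos_of_forall_add_two_mul_deriv_pos (fun s hs => hpos s hs.1) t ⟨ht, le_rfl⟩
  have hd0 : 0 < d := one_pos.trans_le hd
  set N : ℝ → ℝ := fun t => f t + 2 * t * deriv f t
  set δ := d * f (d ^ 2) / 2 with hδ
  have hδ0 : 0 < δ := by have := hfpos (d ^ 2) (sq_nonneg d); positivity
  have hderiv : ∀ r, HasDerivAt (fun r => N (r ^ 2) + δ * r)
      ((-f (r ^ 2) / 2 - (d - 1) * deriv f (r ^ 2)) * (2 * r) + δ) r := fun r => by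
    have hadd := ((hf.hasDerivAt_add_two_mul_deriv (r ^ 2)).comp r (hasDerivAt_pow 2 r)).add
      ((hasDerivAt_id r).const_mul δ)
    exact hadd.congr_deriv (by simp)
  -- `r * f (r ^ 2)` increases, so its second derivative is at most `-δ` from `r = d` on.
  have hanti : AntitoneOn (fun r => N (r ^ 2) + δ * r) (Ici d) := by
    refine antitoneOn_of_deriv_nonpos (convex_Ici d)
      (fun r _ => (hderiv r).continuousAt.continuousWithinAt)
      (fun r _ => (hderiv r).differentiableAt.differentiableWithinAt) fun r hr => ?_
    rw [interior_Ici, mem_Ioi] at hr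
    have hmono : d * f (d ^ 2) < r * f (r ^ 2) :=
      hf.strictMonoOn_mul_comp_sq (fun s _ => hpos _ (sq_nonneg s))
        ⟨hd0.le, hr.le⟩ ⟨hd0.le.trans hr.le, le_rfl⟩ hr
    have hdr : 2 * (d - 1) ≤ r ^ 2 := by nlinarith
    have hsecond : (-f (r ^ 2) / 2 - (d - 1) * deriv f (r ^ 2)) * (2 * r) ≤ -(r * f (r ^ 2)) / 2 :=
      le_of_mul_le_mul_left (by
        nlinarith [mul_nonneg (sub_nonneg.2 hd) (hpos _ (sq_nonneg r)).le,
          mul_nonneg (sub_nonneg.2 hdr) (hfpos _ (sq_nonneg r)).le]) (hd0.trans hr)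
    rw [(hderiv r).deriv]
    linarith
  set r := d + N (d ^ 2) / δ with hr
  have hdr : d ≤ r := le_add_of_nonneg_right (div_nonneg (hpos _ (sq_nonneg d)).le hδ0.le)
  have hle : N (r ^ 2) + δ * r ≤ N (d ^ 2) + δ * d := hanti self_mem_Ici hdr hdr
  rw [hr, mul_add, mul_div_cancel₀ _ hδ0.ne'] at hle
  linarith [hpos (r ^ 2) (sq_nonneg r)]

theorem exists_add_two_mul_deriv_eq_zero (hd : 1 ≤ d) : ∃ T, 0 < T ∧ f T + 2 * T * deriv f T = 0 ∧
    ∀ t ∈ Icc 0 T, 0 < f t := by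
  obtain ⟨b, hb0, hb⟩ := hf.exists_add_two_mul_deriv_nonpos hd
  have hcont : Continuous fun t => f t + 2 * t * deriv f t :=
    continuous_iff_continuousAt.2 fun t => (hf.hasDerivAt_add_two_mul_deriv t).continuousAt
  obtain ⟨T, hT, hTzero, hpos⟩ := exists_first_zero_of_continuousOn hcont.continuousOn hb0
    (by simp [hf.map_zero]) hb
  exact ⟨T, hT.1, hTzero, hf.pos_of_forall_add_two_mul_deriv_pos hpos⟩

end IsBesselProfile

end Bessel

section NeumannMode

variable {E F : Type*} [NormedAddCommGroup E] [InnerProductSpace ℝ E] [NormedAddCommGroup F]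
  [NormedSpace ℝ F] {R : ℝ}

lemma HasFDerivOnBall.add {f g : E → F} {f' g' : E → E →L[ℝ] F} (hf : HasFDerivOnBall R f f')
    (hg : HasFDerivOnBall R g g') : HasFDerivOnBall R (f + g) (f' + g') where
  continuousOn := hf.continuousOn.add hg.continuousOn
  continuousOn_deriv := hf.continuousOn_deriv.add hg.continuousOn_deriv
  hasFDerivAt x hx := (hf.hasFDerivAt x hx).add (hg.hasFDerivAt x hx)

lemma hasGradientOnBall_inner (e : E) : HasGradientOnBall R (fun x => ⟪e, x⟫) fun _ => e :=
  .of_hasFDerivAt (fun _ => (innerSL ℝ e).hasFDerivAt) continuous_const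

lemma hasGradientOnBall_mul_norm_sq (lam : ℝ) :
    HasGradientOnBall R (fun x : E => lam * ‖x‖ ^ 2) fun x => (2 * lam) • x :=
  .of_hasFDerivAt (fun x => ((hasStrictFDerivAt_norm_sq x).hasFDerivAt.const_mul lam).congr_fderiv
    (by ext; simp; ring)) (by fun_prop)

variable [FiniteDimensional ℝ E] {f : ℝ → ℝ}

theorem IsBesselProfile.exists_isNeumannMode (hf : IsBesselProfile (Module.finrank ℝ E) f)
    {lam : ℝ} (hlam : f (lam * R ^ 2) + 2 * (lam * R ^ 2) * deriv f (lam * R ^ 2) = 0) (e : E) :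
    ∃ G H, IsNeumannMode R lam (fun x => ⟪e, x⟫ * f (lam * ‖x‖ ^ 2)) G H := by
  have hsq : HasGradientOnBall R (fun x : E => lam * ‖x‖ ^ 2) fun x => (2 * lam) • x :=
    hasGradientOnBall_mul_norm_sq lam
  have hprofile := hsq.comp hf.hasDerivAt hf.contDiff_deriv.continuous
  have hradial := (hasGradientOnBall_inner (R := R) e).mul <|
    hsq.comp (fun t => (hf.hasDerivAt_deriv t).const_mul (2 * lam))
      ((contDiff_infty_iff_deriv.1 hf.contDiff_deriv).2.continuous.const_mul _)
  have hgrad : HasGradientOnBall R (fun x : E => ⟪e, x⟫ * f (lam * ‖x‖ ^ 2)) fun x =>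
      (⟪e, x⟫ * (2 * lam * deriv f (lam * ‖x‖ ^ 2))) • x + f (lam * ‖x‖ ^ 2) • e := by
    convert (hasGradientOnBall_inner e).mul hprofile using 3 with x
    module
  refine ⟨_, _, hgrad, (hradial.smul (.of_hasFDerivAt hasFDerivAt_id continuous_const)).add
    (hprofile.smul (.of_hasFDerivAt (fun _ => hasFDerivAt_const e _) continuous_const)),
    fun x _ => ?_, fun x hx => ?_⟩
  · simp only [Pi.add_apply, map_add, map_smul, id_eq, smul_zero, zero_add, smul_eq_mul,
      ContinuousLinearMap.toLinearMap_add, ContinuousLinearMap.toLinearMap_smul,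
      ContinuousLinearMap.coe_id, ContinuousLinearMap.coe_smulRight,
      ContinuousLinearMap.toLinearMap_innerSL_apply, LinearMap.trace_id,
      LinearMap.trace_smulRight, LinearMap.add_apply, LinearMap.smul_apply,
      innerₛₗ_apply_apply, real_inner_self_eq_norm_sq, neg_mul]
    rw [real_inner_comm e x]
    linear_combination (lam * ⟪e, x⟫) * hf.ode (lam * ‖x‖ ^ 2)
  · simp only [inner_add_left, real_inner_smul_left, real_inner_self_eq_norm_sq, hx]
    linear_combination ⟪e, x⟫ * hlam

variable (E) in
/-- For every direction `e` there is a smooth Neumann mode with eigenvalue `lam` that vanishes, to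
first order, only on the hyperplane orthogonal to `e`. -/
def HasDirectionalModes (R lam : ℝ) : Prop :=
  ∀ e : E, ∃ φ, ContDiff ℝ (⊤ : ℕ∞) φ ∧ (∃ G H, IsNeumannMode R lam φ G H) ∧
    ∃ c, 0 < c ∧ ∀ x ∈ closedBall 0 R, c * |⟪e, x⟫| ≤ |φ x|

variable (E) in
theorem exists_hasDirectionalModes [Nontrivial E] (hR : 0 < R) :
    ∃ lam, 0 < lam ∧ HasDirectionalModes E R lam := by
  obtain ⟨f, hf⟩ := exists_isBesselProfile (Module.finrank ℝ E).cast_nonneg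
  obtain ⟨T, hT, hcrit, hpos⟩ :=
    hf.exists_add_two_mul_deriv_eq_zero (mod_cast Module.finrank_pos (R := ℝ))
  have hlam : T / R ^ 2 * R ^ 2 = T := div_mul_cancel₀ _ (by positivity)
  refine ⟨T / R ^ 2, by positivity, fun e => ⟨fun x => ⟪e, x⟫ * f (T / R ^ 2 * ‖x‖ ^ 2), ?_,
    hf.exists_isNeumannMode (by rwa [hlam]) e, ?_⟩⟩
  · exact (contDiff_const.inner ℝ contDiff_id).mul
      (hf.contDiff.comp (contDiff_const.mul (contDiff_norm_sq ℝ)))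
  · obtain ⟨t, ht, hmin⟩ := isCompact_Icc.exists_isMinOn (nonempty_Icc.2 hT.le)
      hf.contDiff.continuous.continuousOn
    refine ⟨f t, hpos t ht, fun x hx => ?_⟩
    have hmem : T / R ^ 2 * ‖x‖ ^ 2 ∈ Icc 0 T := by
      refine ⟨by positivity, ?_⟩
      nth_rw 2 [← hlam]
      gcongr
      exact mem_closedBall_zero_iff.1 hx
    rw [abs_mul, mul_comm, abs_of_pos (hpos _ hmem)]
    gcongr
    exact hmin hmem

end NeumannMode

section Reflection

/-- The reflection of `E` in the hyperplane orthogonal to `e`. -/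
abbrev hyperplaneReflection {E : Type*} [NormedAddCommGroup E] [InnerProductSpace ℝ E] (e : E) :
    E ≃ₗᵢ[ℝ] E :=
  (ℝ ∙ e)ᗮ.reflection

lemma norm_mul_norm_sub_hyperplaneReflection {E : Type*} [NormedAddCommGroup E]
    [InnerProductSpace ℝ E] (e x : E) :
    ‖e‖ * ‖x - hyperplaneReflection e x‖ = 2 * |⟪e, x⟫| := by
  rcases eq_or_ne e 0 with rfl | he
  · simp
  have : 0 < ‖e‖ := norm_pos_iff.2 he
  have hsub : x - hyperplaneReflection e x = (2 * (⟪e, x⟫ / ‖e‖ ^ 2)) • e := by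
    rw [hyperplaneReflection, Submodule.reflection_orthogonal_apply,
      Submodule.reflection_singleton_apply]
    simp only [RCLike.ofReal_real_eq_id, id]
    module
  rw [hsub, norm_smul, Real.norm_eq_abs, abs_mul, abs_div, abs_two, abs_sq]
  field_simp

variable {E F : Type*} [NormedAddCommGroup E] [InnerProductSpace ℝ E] [NormedAddCommGroup F]
  {R : ℝ}

/-- The average of `f` with its conjugate `T ∘ f ∘ ρ` under a symmetry `ρ` of the domain and a
linear isometry `T` of the target. -/
def conjAverage [NormedSpace ℝ F] (ρ : E ≃ₗᵢ[ℝ] E) (T : F →ₗᵢ[ℝ] F) (f : E → F) (x : E) : F :=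
  (2⁻¹ : ℝ) • (f x + T (f (ρ x)))

section NormedSpace

variable [NormedSpace ℝ F] (ρ : E ≃ₗᵢ[ℝ] E) (T : F →ₗᵢ[ℝ] F) {f : E → F}

lemma norm_conjAverage_le {M : ℝ} (hf : ∀ x ∈ closedBall 0 R, ‖f x‖ ≤ M) :
    ∀ x ∈ closedBall 0 R, ‖conjAverage ρ T f x‖ ≤ M := fun x hx => by
  have hadd := (norm_add_le (f x) (T (f (ρ x)))).trans
    (add_le_add (hf x hx) ((T.norm_map _).trans_le (hf (ρ x) (by simpa using hx))))
  rw [conjAverage, norm_smul, norm_inv, Real.norm_ofNat]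
  linarith

lemma lipschitzOnWith_conjAverage {K : ℝ≥0} (hf : LipschitzOnWith K f (closedBall 0 R)) :
    LipschitzOnWith K (conjAverage ρ T f) (closedBall 0 R) := by
  have hfρ : LipschitzOnWith K (T ∘ f ∘ ρ) (closedBall 0 R) := by
    simpa using T.lipschitz.comp_lipschitzOnWith <| hf.comp
      (ρ.lipschitz.lipschitzOnWith (s := closedBall 0 R)) fun x hx => by simpa using hx
  refine LipschitzOnWith.of_dist_le_mul fun x hx y hy => ?_
  have hadd := (dist_add_add_le _ _ _ _).trans
    (add_le_add (hf.dist_le_mul x hx y hy) (hfρ.dist_le_mul x hx y hy))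
  simp only [Function.comp_apply] at hadd
  rw [conjAverage, conjAverage, dist_smul₀, norm_inv, Real.norm_ofNat]
  linarith

lemma continuousOn_conjAverage (hf : ContinuousOn f (closedBall 0 R)) :
    ContinuousOn (conjAverage ρ T f) (closedBall 0 R) := by
  have hfρ : ContinuousOn (fun x => f (ρ x)) (closedBall 0 R) :=
    hf.comp ρ.continuous.continuousOn fun x hx => by simpa using hx
  exact (hf.add (T.continuous.comp_continuousOn hfρ)).const_smul (2⁻¹ : ℝ)

end NormedSpace

variable [MeasurableSpace E] [BorelSpace E] [FiniteDimensional ℝ E]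

lemma setIntegral_ball_comp_linearIsometryEquiv [NormedSpace ℝ F] (ρ : E ≃ₗᵢ[ℝ] E) (g : E → F) :
    ∫ x in ball 0 R, g (ρ x) = ∫ x in ball 0 R, g x := by
  have hpre : ρ ⁻¹' ball 0 R = ball 0 R := by ext; simp
  simpa only [hpre] using ρ.measurePreserving.setIntegral_preimage_emb
    ρ.toHomeomorph.measurableEmbedding g (ball 0 R)

lemma integrableOn_ball_norm_sq {f : E → F} (hf : ContinuousOn f (closedBall 0 R)) :
    IntegrableOn (fun x => ‖f x‖ ^ 2) (ball 0 R) :=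
  integrableOn_ball_of_continuousOn (hf.norm.pow 2)

lemma setIntegral_norm_sq_eq_add_conjAverage [InnerProductSpace ℝ F] (ρ : E ≃ₗᵢ[ℝ] E)
    (T : F →ₗᵢ[ℝ] F) {f : E → F} (hf : ContinuousOn f (closedBall 0 R)) :
    ∫ x in ball 0 R, ‖f x‖ ^ 2 = (∫ x in ball 0 R, ‖conjAverage ρ T f x‖ ^ 2) +
      ∫ x in ball 0 R, ‖f x - conjAverage ρ T f x‖ ^ 2 := by
  have hfρ : ContinuousOn (fun x => f (ρ x)) (closedBall 0 R) :=
    hf.comp ρ.continuous.continuousOn fun x hx => by simpa using hx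
  have havg := continuousOn_conjAverage ρ T hf
  have hdiff : ContinuousOn (fun x => f x - conjAverage ρ T f x) (closedBall 0 R) := hf.sub havg
  have hpar : ∀ x, ‖conjAverage ρ T f x‖ ^ 2 + ‖f x - conjAverage ρ T f x‖ ^ 2 =
      2⁻¹ * (‖f x‖ ^ 2 + ‖f (ρ x)‖ ^ 2) := fun x => by
    have hsub : f x - conjAverage ρ T f x = (2⁻¹ : ℝ) • (f x - T (f (ρ x))) := by
      rw [conjAverage]; module
    have := parallelogram_law_with_norm ℝ (f x) (T (f (ρ x)))
    rw [T.norm_map] at this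
    rw [hsub, conjAverage, norm_smul, norm_smul, norm_inv, Real.norm_ofNat]
    linear_combination this / 4
  rw [← integral_add (integrableOn_ball_norm_sq havg) (integrableOn_ball_norm_sq hdiff)]
  simp only [hpar]
  rw [integral_const_mul,
    integral_add (integrableOn_ball_norm_sq hf) (integrableOn_ball_norm_sq hfρ),
    setIntegral_ball_comp_linearIsometryEquiv ρ fun x => ‖f x‖ ^ 2]
  ring

lemma HasDirectionalModes.mul_integral_sq_le_of_hyperplaneReflection_eq_neg {lam : ℝ}
    (hE : HasDirectionalModes E R lam) (hR : 0 < R) {e : E} (he : e ≠ 0) {w : E → ℝ} {W : E → E}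
    (hw : HasGradientOnBall R w W)
    (hodd : ∀ x ∈ closedBall 0 R, w (hyperplaneReflection e x) = -w x) :
    lam * ∫ x in ball 0 R, w x ^ 2 ≤ ∫ x in ball 0 R, ‖W x‖ ^ 2 := by
  obtain ⟨φ, -, ⟨G, H, hφ⟩, c, hc, hlow⟩ := hE e
  obtain ⟨K, hK⟩ := HasFDerivOnBall.exists_lipschitzOnWith hw hR.ne'
  have : 0 < ‖e‖ := norm_pos_iff.2 he
  refine hφ.mul_integral_sq_le_of_abs_le hR hw (K := K / (‖e‖ * c)) fun x hx => ?_
  have hxR := ball_subset_closedBall hx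
  have hdist := hK.norm_sub_le hxR (y := hyperplaneReflection e x) (by simpa using hxR)
  rw [hodd x hxR, sub_neg_eq_add, ← two_mul, Real.norm_eq_abs, abs_mul, abs_two] at hdist
  rw [div_mul_eq_mul_div, le_div_iff₀ (by positivity)]
  calc |w x| * (‖e‖ * c) = 2⁻¹ * (2 * |w x|) * ‖e‖ * c := by ring
    _ ≤ 2⁻¹ * (K * ‖x - hyperplaneReflection e x‖) * ‖e‖ * c := by gcongr
    _ = K * (c * |⟪e, x⟫|) := by
      linear_combination (2⁻¹ * K * c) * norm_mul_norm_sub_hyperplaneReflection e x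
    _ ≤ K * |φ x| := by gcongr; exact hlow x hxR

end Reflection

lemma exists_subseq_tendstoUniformlyOn_of_lipschitzOnWith {X F : Type*} [PseudoMetricSpace X]
    [NormedAddCommGroup F] [ProperSpace F] {s : Set X} (hs : IsCompact s) {K : ℝ≥0} {M : ℝ}
    {f : ℕ → X → F} (hK : ∀ k, LipschitzOnWith K (f k) s) (hM : ∀ k, ∀ x ∈ s, ‖f k x‖ ≤ M) :
    ∃ g, ∃ φ : ℕ → ℕ, StrictMono φ ∧ TendstoUniformlyOn (fun k => f (φ k)) g atTop s := by
  have : CompactSpace s := isCompact_iff_compactSpace.1 hs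
  let G : ℕ → BoundedContinuousFunction s F := fun k =>
    .mkOfCompact ⟨_, (hK k).continuousOn.domRestrict⟩
  have hcompact : IsCompact (closure (range G)) := by
    refine BoundedContinuousFunction.arzela_ascoli (closedBall 0 M) (isCompact_closedBall _ _) _
      ?_ (LipschitzWith.uniformEquicontinuous _ K ?_).equicontinuous
    · rintro _ x ⟨k, rfl⟩
      exact mem_closedBall_zero_iff.2 (hM k x x.2)
    · rintro ⟨_, k, rfl⟩
      exact (hK k).to_restrict
  obtain ⟨g, -, φ, hφ, hg⟩ := hcompact.tendsto_subseq fun k => subset_closure (mem_range_self k)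
  rw [BoundedContinuousFunction.tendsto_iff_tendstoUniformly] at hg
  refine ⟨Function.extend Subtype.val g 0, φ, hφ,
    tendstoUniformlyOn_iff_tendstoUniformly_comp_coe.2 ?_⟩
  rwa [Function.extend_comp Subtype.val_injective]

lemma tendsto_setIntegral_ball_of_norm_le {X F : Type*} [PseudoMetricSpace X] [ProperSpace X]
    [MeasurableSpace X] [OpensMeasurableSpace X] {μ : Measure X} [IsFiniteMeasureOnCompacts μ]
    [NormedAddCommGroup F] [NormedSpace ℝ F] {x₀ : X} {R M : ℝ} {f : ℕ → X → F} {g : X → F}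
    (hf : ∀ k, ContinuousOn (f k) (closedBall x₀ R)) (hM : ∀ k, ∀ x ∈ closedBall x₀ R, ‖f k x‖ ≤ M)
    (hg : ∀ x ∈ closedBall x₀ R, Tendsto (fun k => f k x) atTop (𝓝 (g x))) :
    Tendsto (fun k => ∫ x in ball x₀ R, f k x ∂μ) atTop (𝓝 (∫ x in ball x₀ R, g x ∂μ)) := by
  refine tendsto_integral_of_dominated_convergence (fun _ => M)
    (fun k => (integrableOn_ball_of_continuousOn (hf k)).aestronglyMeasurable)
    (integrableOn_ball_of_continuousOn continuousOn_const) (fun k => ?_) ?_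
  · filter_upwards [ae_restrict_mem measurableSet_ball] with x hx
    exact hM k x (ball_subset_closedBall hx)
  · filter_upwards [ae_restrict_mem measurableSet_ball] with x hx
    exact hg x (ball_subset_closedBall hx)

lemma lipschitzOnWith_of_tendsto {K : ℝ≥0} {X Y : Type*} [PseudoEMetricSpace X]
    [PseudoEMetricSpace Y] {f : ℕ → X → Y} {g : X → Y} {s : Set X}
    (hf : ∀ k, LipschitzOnWith K (f k) s)
    (hg : ∀ x ∈ s, Tendsto (fun k => f k x) atTop (𝓝 (g x))) : LipschitzOnWith K g s :=
  fun x hx y hy => le_of_tendsto' ((hg x hx).edist (hg y hy)) fun k => hf k hx hy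

section Competitors

variable {E : Type*} [NormedAddCommGroup E] [InnerProductSpace ℝ E] {R : ℝ} {v w : E → ℝ}
  {V W : E → E}

lemma HasGradientOnBall.sub (hv : HasGradientOnBall R v V) (hw : HasGradientOnBall R w W) :
    HasGradientOnBall R (fun x => v x - w x) fun x => V x - W x :=
  .mk (hv.continuousOn.sub hw.continuousOn)
    (hv.continuousOn_gradient.sub hw.continuousOn_gradient)
    fun x hx => ((hv.hasFDerivAt x hx).sub (hw.hasFDerivAt x hx)).congr_fderiv (by simp)

lemma HasGradientOnBall.symmetrize (hv : HasGradientOnBall R v V) (ρ : E ≃ₗᵢ[ℝ] E) :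
    HasGradientOnBall R (conjAverage ρ .id v) (conjAverage ρ ρ.symm.toLinearIsometry V) := by
  refine .mk (continuousOn_conjAverage ρ _ hv.continuousOn)
    (continuousOn_conjAverage ρ _ hv.continuousOn_gradient) fun x hx => ?_
  have hcomp := (hv.hasFDerivAt (ρ x) (by simpa using hx)).comp x
    ρ.toContinuousLinearEquiv.hasFDerivAt
  refine (((hv.hasFDerivAt x hx).add hcomp).const_smul (2⁻¹ : ℝ)).congr_fderiv ?_
  ext y
  simp [conjAverage, ρ.symm.inner_map_eq_flip]

lemma HasGradientOnBall.of_tendstoUniformlyOn {v : ℕ → E → ℝ} {V : ℕ → E → E}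
    (h : ∀ k, HasGradientOnBall R (v k) (V k)) (hv : TendstoUniformlyOn v w atTop (closedBall 0 R))
    (hV : TendstoUniformlyOn V W atTop (closedBall 0 R)) : HasGradientOnBall R w W :=
  .mk (hv.continuousOn (.of_forall fun k => (h k).continuousOn))
    (hV.continuousOn (.of_forall fun k => (h k).continuousOn_gradient))
    fun _ hx => hasFDerivAt_of_tendstoUniformlyOn isOpen_ball
      ((innerSL ℝ).uniformContinuous.comp_tendstoUniformlyOn (hV.mono ball_subset_closedBall))
      (fun k => (h k).hasFDerivAt) (fun _ hy => hv.tendsto_at (ball_subset_closedBall hy)) hx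

variable [MeasurableSpace E] [BorelSpace E] [FiniteDimensional ℝ E]

/-- `v`, with gradient `V`, is a `C¹` function of mean zero whose energy
`∫ ‖∇v‖² - lam * ∫ v²` is at most `q`, with the uniform bounds `M` and Lipschitz constant `K` that
make the class of all such functions compact. -/
structure IsCompetitor (R M lam q : ℝ) (K : ℝ≥0) (v : E → ℝ) (V : E → E) : Prop where
  hasGradientOnBall : HasGradientOnBall R v V
  norm_le : ∀ x ∈ closedBall 0 R, ‖v x‖ ≤ M
  norm_gradient_le : ∀ x ∈ closedBall 0 R, ‖V x‖ ≤ M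
  lipschitzOnWith : LipschitzOnWith K v (closedBall 0 R)
  lipschitzOnWith_gradient : LipschitzOnWith K V (closedBall 0 R)
  integral_eq_zero : ∫ x in ball 0 R, v x = 0
  energy_le : (∫ x in ball 0 R, ‖V x‖ ^ 2) - lam * ∫ x in ball 0 R, ‖v x‖ ^ 2 ≤ q

variable {M lam q : ℝ} {K : ℝ≥0}

lemma HasDirectionalModes.mul_integral_sub_conjAverage_sq_le (hE : HasDirectionalModes E R lam)
    (hR : 0 < R) {e : E} (he : e ≠ 0) (hv : HasGradientOnBall R v V) :
    lam * ∫ x in ball 0 R, ‖v x - conjAverage (hyperplaneReflection e) .id v x‖ ^ 2 ≤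
      ∫ x in ball 0 R, ‖V x - conjAverage (hyperplaneReflection e)
        (hyperplaneReflection e).symm.toLinearIsometry V x‖ ^ 2 := by
  simp only [Real.norm_eq_abs (_ - _), sq_abs]
  refine hE.mul_integral_sq_le_of_hyperplaneReflection_eq_neg hR he (hv.sub (hv.symmetrize _))
    fun x _ => ?_
  simp only [conjAverage, LinearIsometry.id_apply, smul_eq_mul, Submodule.reflection_reflection]
  ring

lemma setIntegral_conjAverage_id (ρ : E ≃ₗᵢ[ℝ] E) (hv : ContinuousOn v (closedBall 0 R)) :
    ∫ x in ball 0 R, conjAverage ρ .id v x = ∫ x in ball 0 R, v x := by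
  have hint : IntegrableOn (fun x => v (ρ x)) (ball 0 R) := integrableOn_ball_of_continuousOn
    (hv.comp ρ.continuous.continuousOn fun x hx => by simpa using hx)
  simp only [conjAverage, LinearIsometry.id_apply]
  rw [integral_smul, integral_add (integrableOn_ball_of_continuousOn hv) hint,
    setIntegral_ball_comp_linearIsometryEquiv ρ v, smul_eq_mul]
  ring

lemma IsCompetitor.symmetrize (hv : IsCompetitor R M lam q K v V)
    (hE : HasDirectionalModes E R lam) (hR : 0 < R) {e : E} (he : e ≠ 0) :
    IsCompetitor R M lam q K (conjAverage (hyperplaneReflection e) .id v)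
      (conjAverage (hyperplaneReflection e)
        (hyperplaneReflection e).symm.toLinearIsometry V) where
  hasGradientOnBall := hv.hasGradientOnBall.symmetrize _
  norm_le := norm_conjAverage_le _ _ hv.norm_le
  norm_gradient_le := norm_conjAverage_le _ _ hv.norm_gradient_le
  lipschitzOnWith := lipschitzOnWith_conjAverage _ _ hv.lipschitzOnWith
  lipschitzOnWith_gradient := lipschitzOnWith_conjAverage _ _ hv.lipschitzOnWith_gradient
  integral_eq_zero :=
    (setIntegral_conjAverage_id _ hv.hasGradientOnBall.continuousOn).trans hv.integral_eq_zero
  energy_le := by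
    have hodd := hE.mul_integral_sub_conjAverage_sq_le hR he hv.hasGradientOnBall
    have henergy := hv.energy_le
    rw [setIntegral_norm_sq_eq_add_conjAverage (hyperplaneReflection e) .id
        hv.hasGradientOnBall.continuousOn,
      setIntegral_norm_sq_eq_add_conjAverage (hyperplaneReflection e)
        (hyperplaneReflection e).symm.toLinearIsometry
        hv.hasGradientOnBall.continuousOn_gradient] at henergy
    linarith

lemma tendsto_setIntegral_norm_sq_of_norm_le {F : Type*} [NormedAddCommGroup F] {f : ℕ → E → F}
    {g : E → F} (hf : ∀ k, ContinuousOn (f k) (closedBall 0 R))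
    (hM : ∀ k, ∀ x ∈ closedBall 0 R, ‖f k x‖ ≤ M)
    (hg : ∀ x ∈ closedBall 0 R, Tendsto (fun k => f k x) atTop (𝓝 (g x))) :
    Tendsto (fun k => ∫ x in ball 0 R, ‖f k x‖ ^ 2) atTop (𝓝 (∫ x in ball 0 R, ‖g x‖ ^ 2)) := by
  refine tendsto_setIntegral_ball_of_norm_le (M := M ^ 2) (fun k => (hf k).norm.pow 2)
    (fun k x hx => ?_) fun x hx => (hg x hx).norm.pow 2
  rw [norm_pow, norm_norm]
  gcongr
  exact hM k x hx

lemma IsCompetitor.of_tendstoUniformlyOn {v : ℕ → E → ℝ} {V : ℕ → E → E}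
    (h : ∀ k, IsCompetitor R M lam q K (v k) (V k))
    (hv : TendstoUniformlyOn v w atTop (closedBall 0 R))
    (hV : TendstoUniformlyOn V W atTop (closedBall 0 R)) : IsCompetitor R M lam q K w W where
  hasGradientOnBall := .of_tendstoUniformlyOn (fun k => (h k).hasGradientOnBall) hv hV
  norm_le x hx := le_of_tendsto' (hv.tendsto_at hx).norm fun k => (h k).norm_le x hx
  norm_gradient_le x hx :=
    le_of_tendsto' (hV.tendsto_at hx).norm fun k => (h k).norm_gradient_le x hx
  lipschitzOnWith :=
    lipschitzOnWith_of_tendsto (fun k => (h k).lipschitzOnWith) fun _ => hv.tendsto_at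
  lipschitzOnWith_gradient :=
    lipschitzOnWith_of_tendsto (fun k => (h k).lipschitzOnWith_gradient) fun _ => hV.tendsto_at
  integral_eq_zero := by
    have hlim := tendsto_setIntegral_ball_of_norm_le (μ := volume)
      (fun k => (h k).hasGradientOnBall.continuousOn) (fun k => (h k).norm_le)
      fun _ => hv.tendsto_at
    exact (tendsto_nhds_unique hlim
      (tendsto_const_nhds.congr fun k => (h k).integral_eq_zero.symm))
  energy_le := by
    have hlim := tendsto_setIntegral_norm_sq_of_norm_le
      (fun k => (h k).hasGradientOnBall.continuousOn) (fun k => (h k).norm_le)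
      fun _ => hv.tendsto_at
    have hlim' := tendsto_setIntegral_norm_sq_of_norm_le
      (fun k => (h k).hasGradientOnBall.continuousOn_gradient) (fun k => (h k).norm_gradient_le)
      fun _ => hV.tendsto_at
    exact le_of_tendsto' (hlim'.sub (hlim.const_mul lam)) fun k => (h k).energy_le

lemma IsCompetitor.exists_subseq_tendstoUniformlyOn {v : ℕ → E → ℝ} {V : ℕ → E → E}
    (h : ∀ k, IsCompetitor R M lam q K (v k) (V k)) : ∃ w W, ∃ φ : ℕ → ℕ, StrictMono φ ∧
      TendstoUniformlyOn (fun k => v (φ k)) w atTop (closedBall 0 R) ∧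
      TendstoUniformlyOn (fun k => V (φ k)) W atTop (closedBall 0 R) := by
  obtain ⟨g, φ, hφ, hg⟩ := exists_subseq_tendstoUniformlyOn_of_lipschitzOnWith
    (isCompact_closedBall (0 : E) R)
    (fun k => (h k).lipschitzOnWith.prodMk (h k).lipschitzOnWith_gradient)
    fun k x hx => norm_prod_le_iff.2 ⟨(h k).norm_le x hx, (h k).norm_gradient_le x hx⟩
  exact ⟨fun x => (g x).1, fun x => (g x).2, φ, hφ,
    uniformContinuous_fst.comp_tendstoUniformlyOn hg,
    uniformContinuous_snd.comp_tendstoUniformlyOn hg⟩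

theorem IsCompetitor.exists_minimizer (hv : IsCompetitor R M lam q K v V) :
    ∃ (w : E → ℝ) (W : E → E), IsCompetitor R M lam q K w W ∧ ∀ (v : E → ℝ) (V : E → E),
      IsCompetitor R M lam q K v V → ∫ x in ball 0 R, ‖w x‖ ^ 2 ≤ ∫ x in ball 0 R, ‖v x‖ ^ 2 := by
  let S : Set ℝ := {t | ∃ (v : E → ℝ) (V : E → E),
    IsCompetitor R M lam q K v V ∧ ∫ x in ball 0 R, ‖v x‖ ^ 2 = t}
  have hbdd : BddBelow S := ⟨0, by rintro _ ⟨v, V, -, rfl⟩; positivity⟩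
  obtain ⟨t, -, ht, hmem⟩ := exists_seq_tendsto_sInf (S := S) ⟨_, v, V, hv, rfl⟩ hbdd
  choose v V hvV hvt using hmem
  obtain ⟨w, W, φ, hφ, hw, hW⟩ := exists_subseq_tendstoUniformlyOn hvV
  have hlim := tendsto_setIntegral_norm_sq_of_norm_le
    (fun k => (hvV (φ k)).hasGradientOnBall.continuousOn) (fun k => (hvV (φ k)).norm_le)
    fun _ => hw.tendsto_at
  simp only [hvt] at hlim
  refine ⟨w, W, .of_tendstoUniformlyOn (fun k => hvV (φ k)) hw hW, fun v V h => ?_⟩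
  rw [tendsto_nhds_unique hlim (ht.comp hφ.tendsto_atTop)]
  exact csInf_le hbdd ⟨v, V, h, rfl⟩

/-- `v` depends only on the norm in the closed ball of radius `R`. -/
def IsRadialOnBall (R : ℝ) (v : E → ℝ) : Prop :=
  ∀ x y, ‖x‖ ≤ R → ‖x‖ = ‖y‖ → v x = v y

lemma eq_zero_of_setIntegral_ball_norm_sq_eq_zero {F : Type*} [NormedAddCommGroup F] {f : E → F}
    (hR : R ≠ 0) (hf : ContinuousOn f (closedBall 0 R)) (h0 : ∫ x in ball 0 R, ‖f x‖ ^ 2 = 0) :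
    ∀ x ∈ closedBall 0 R, f x = 0 := by
  rw [setIntegral_eq_zero_iff_of_nonneg_ae (.of_forall fun x => sq_nonneg _)
    (integrableOn_ball_norm_sq hf)] at h0
  have hball : EqOn f 0 (ball 0 R) := Measure.eqOn_open_of_ae_eq
    (h0.mono fun x hx => by simpa using hx) isOpen_ball (hf.mono ball_subset_closedBall)
    continuousOn_const
  exact hball.of_subset_closure hf continuousOn_const ball_subset_closedBall (closure_ball 0 hR).ge

theorem IsCompetitor.isRadialOnBall_of_minimizer (hw : IsCompetitor R M lam q K w W)
    (hE : HasDirectionalModes E R lam) (hR : 0 < R)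
    (hmin : ∀ (v : E → ℝ) (V : E → E), IsCompetitor R M lam q K v V →
      ∫ x in ball 0 R, ‖w x‖ ^ 2 ≤ ∫ x in ball 0 R, ‖v x‖ ^ 2) :
    IsRadialOnBall R w := by
  intro x y hx hxy
  rcases eq_or_ne x y with rfl | hne
  · rfl
  set ρ := hyperplaneReflection (x - y)
  have hcont := hw.hasGradientOnBall.continuousOn
  have hdefect : ∫ z in ball 0 R, ‖w z - conjAverage ρ .id w z‖ ^ 2 = 0 := by
    refine le_antisymm ?_ (by positivity)
    linarith [hmin _ _ (hw.symmetrize hE hR (sub_ne_zero.2 hne)),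
      setIntegral_norm_sq_eq_add_conjAverage ρ .id hcont]
  have hzero : w x - conjAverage ρ .id w x = 0 := eq_zero_of_setIntegral_ball_norm_sq_eq_zero
    hR.ne' (hcont.sub (continuousOn_conjAverage ρ _ hcont)) hdefect x (by simpa using hx)
  have hρx : ρ x = y := Submodule.reflection_sub hxy
  simp only [conjAverage, hρx, LinearIsometry.id_apply, smul_eq_mul] at hzero
  linarith

end Competitors

/-- The weighted average `∫₀¹ tᵏ f (t x) dt` of `f` along the segment from `0` to `x`. For
`k + 1 = dim E`, the divergence of `rayAverage k v x • x` is `v`. -/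
def rayAverage {E F : Type*} [NormedAddCommGroup E] [NormedSpace ℝ E] [NormedAddCommGroup F]
    [NormedSpace ℝ F] (k : ℕ) (f : E → F) (x : E) : F :=
  ∫ t in (0 : ℝ)..1, t ^ k • f (t • x)

section RayAverage

variable {E F : Type*} [NormedAddCommGroup E] [NormedSpace ℝ E] [NormedAddCommGroup F]
  {R : ℝ} {f : E → F} {x : E} {t : ℝ}

lemma smul_mem_closedBall_zero (ht : t ∈ Icc 0 1) (hx : x ∈ closedBall 0 R) :
    t • x ∈ closedBall 0 R :=
  (convex_closedBall 0 R).smul_mem_of_zero_mem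
    (mem_closedBall_self ((norm_nonneg x).trans (mem_closedBall_zero_iff.1 hx))) hx ht

lemma smul_mem_ball_zero (ht : t ∈ Icc 0 1) (hx : x ∈ ball 0 R) : t • x ∈ ball 0 R :=
  (convex_ball 0 R).smul_mem_of_zero_mem (mem_ball_self (pos_of_mem_ball hx)) hx ht

variable [NormedSpace ℝ F] {f' : E → E →L[ℝ] F}

lemma continuousOn_pow_smul_comp_smul (k : ℕ) (hf : ContinuousOn f (closedBall 0 R))
    (hx : x ∈ closedBall 0 R) : ContinuousOn (fun t : ℝ => t ^ k • f (t • x)) (uIcc 0 1) := by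
  rw [uIcc_of_le zero_le_one]
  exact (continuousOn_id.pow k).smul
    (hf.comp (by fun_prop) fun _ ht => smul_mem_closedBall_zero ht hx)

lemma intervalIntegrable_pow_smul_comp_smul (k : ℕ) (hf : ContinuousOn f (closedBall 0 R))
    (hx : x ∈ closedBall 0 R) : IntervalIntegrable (fun t : ℝ => t ^ k • f (t • x)) volume 0 1 :=
  (continuousOn_pow_smul_comp_smul k hf hx).intervalIntegrable

lemma norm_pow_smul_comp_smul_le (k : ℕ) {C : ℝ} (hC : ∀ x ∈ closedBall 0 R, ‖f x‖ ≤ C)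
    (hx : x ∈ closedBall 0 R) (ht : t ∈ Icc 0 1) : ‖t ^ k • f (t • x)‖ ≤ C := by
  rw [norm_smul, norm_pow, Real.norm_of_nonneg ht.1]
  exact (mul_le_of_le_one_left (norm_nonneg _) (pow_le_one₀ ht.1 ht.2)).trans
    (hC _ (smul_mem_closedBall_zero ht hx))

lemma uIoc_zero_one_subset_Icc : uIoc (0 : ℝ) 1 ⊆ Icc 0 1 :=
  (uIoc_of_le zero_le_one).trans_subset Ioc_subset_Icc_self

lemma continuousOn_rayAverage [ProperSpace E] (k : ℕ) (hf : ContinuousOn f (closedBall 0 R)) :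
    ContinuousOn (rayAverage k f) (closedBall 0 R) := by
  obtain ⟨C, hC⟩ := (isCompact_closedBall (0 : E) R).exists_bound_of_continuousOn hf
  intro x hx
  refine intervalIntegral.continuousWithinAt_of_dominated_interval (bound := fun _ => C) ?_ ?_
    intervalIntegrable_const ?_
  · filter_upwards [self_mem_nhdsWithin] with y hy
    exact (intervalIntegrable_pow_smul_comp_smul k hf hy).aestronglyMeasurable_restrict_uIoc
  · filter_upwards [self_mem_nhdsWithin] with y hy
    exact .of_forall fun t ht =>
      norm_pow_smul_comp_smul_le k hC hy (uIoc_zero_one_subset_Icc ht)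
  · refine .of_forall fun t ht => ContinuousWithinAt.const_smul ?_ _
    have hmaps : MapsTo (t • ·) (closedBall (0 : E) R) (closedBall 0 R) := fun y =>
      smul_mem_closedBall_zero (uIoc_zero_one_subset_Icc ht)
    exact (hf _ (hmaps hx)).comp (by fun_prop) hmaps

lemma HasFDerivOnBall.hasFDerivAt_pow_smul_comp_smul (hf : HasFDerivOnBall R f f') (k : ℕ)
    (ht : t ∈ Icc 0 1) (hx : x ∈ ball 0 R) :
    HasFDerivAt (fun y => t ^ k • f (t • y)) (t ^ (k + 1) • f' (t • x)) x := by
  have hcomp := (hf.hasFDerivAt _ (smul_mem_ball_zero ht hx)).comp x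
    ((hasFDerivAt_id x).const_smul t)
  refine (hcomp.const_smul (t ^ k)).congr_fderiv ?_
  ext y
  simp [smul_smul, pow_succ]

lemma HasFDerivOnBall.hasFDerivOnBall_rayAverage [ProperSpace E]
    (hf : HasFDerivOnBall R f f') (k : ℕ) :
    HasFDerivOnBall R (rayAverage k f) (rayAverage (k + 1) f') where
  continuousOn := continuousOn_rayAverage k hf.continuousOn
  continuousOn_deriv := continuousOn_rayAverage (k + 1) hf.continuousOn_deriv
  hasFDerivAt x hx := by
    obtain ⟨C, hC⟩ := (isCompact_closedBall (0 : E) R).exists_bound_of_continuousOn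
      hf.continuousOn_deriv
    refine intervalIntegral.hasFDerivAt_integral_of_dominated_of_fderiv_le (bound := fun _ => C)
      (isOpen_ball.mem_nhds hx) ?_
      (intervalIntegrable_pow_smul_comp_smul k hf.continuousOn (ball_subset_closedBall hx))
      (intervalIntegrable_pow_smul_comp_smul (k + 1) hf.continuousOn_deriv
        (ball_subset_closedBall hx)).aestronglyMeasurable_restrict_uIoc
      (.of_forall fun t ht y hy => norm_pow_smul_comp_smul_le (k + 1) hC
        (ball_subset_closedBall hy) (uIoc_zero_one_subset_Icc ht))
      intervalIntegrable_const
      (.of_forall fun t ht y hy =>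
        hf.hasFDerivAt_pow_smul_comp_smul k (uIoc_zero_one_subset_Icc ht) hy)
    filter_upwards [isOpen_ball.mem_nhds hx] with y hy
    exact (intervalIntegrable_pow_smul_comp_smul k hf.continuousOn
      (ball_subset_closedBall hy)).aestronglyMeasurable_restrict_uIoc

lemma HasFDerivOnBall.rayAverage_add_rayAverage_apply [CompleteSpace F]
    (hf : HasFDerivOnBall R f f') (k : ℕ) (hx : x ∈ ball 0 R) :
    (k + 1 : ℝ) • rayAverage k f x + rayAverage (k + 1) f' x x = f x := by
  have hxc := ball_subset_closedBall hx
  have hint := intervalIntegrable_pow_smul_comp_smul k hf.continuousOn hxc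
  have hint' := intervalIntegrable_pow_smul_comp_smul (k + 1) hf.continuousOn_deriv hxc
  have hderiv : ∀ t ∈ uIcc (0 : ℝ) 1, HasDerivAt (fun t => t ^ (k + 1) • f (t • x))
      ((k + 1 : ℝ) • t ^ k • f (t • x) + (t ^ (k + 1) • f' (t • x)) x) t := fun t ht => by
    rw [uIcc_of_le zero_le_one] at ht
    have hray : HasDerivAt (fun t : ℝ => t • x) ((1 : ℝ) • x) t := (hasDerivAt_id t).smul_const x
    refine ((hasDerivAt_pow (k + 1) t).smul
      ((hf.hasFDerivAt _ (smul_mem_ball_zero ht hx)).comp_hasDerivAt t hray)).congr_deriv ?_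
    simp [smul_smul, add_comm]
  have hsmul : IntervalIntegrable (fun t => (k + 1 : ℝ) • t ^ k • f (t • x)) volume 0 1 :=
    hint.smul (k + 1 : ℝ)
  have happly : IntervalIntegrable (fun t => (t ^ (k + 1) • f' (t • x)) x) volume 0 1 :=
    ⟨hint'.1.apply_continuousLinearMap x, hint'.2.apply_continuousLinearMap x⟩
  have hftc := intervalIntegral.integral_eq_sub_of_hasDerivAt hderiv (hsmul.add happly)
  rw [intervalIntegral.integral_add hsmul happly, intervalIntegral.integral_smul,
    ← ContinuousLinearMap.intervalIntegral_apply hint'] at hftc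
  simpa [rayAverage] using hftc

end RayAverage

section Radial

variable {E : Type*} [NormedAddCommGroup E] [InnerProductSpace ℝ E] {R : ℝ} {v m : E → ℝ}
  {V P : E → E}

lemma IsRadialOnBall.rayAverage (hv : IsRadialOnBall R v) (k : ℕ) :
    IsRadialOnBall R (rayAverage k v) := by
  intro x y hx hxy
  refine intervalIntegral.integral_congr fun t ht => ?_
  rw [uIcc_of_le zero_le_one] at ht
  have htx : t • x ∈ closedBall 0 R := smul_mem_closedBall_zero ht (by simpa using hx)
  exact congrArg _ (hv _ _ (by simpa using htx) (by rw [norm_smul, norm_smul, hxy]))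

lemma HasGradientOnBall.exists_eq_smul_of_isRadialOnBall (hv : HasGradientOnBall R v V)
    (hrad : IsRadialOnBall R v) {x : E} (hx : x ∈ ball 0 R) : ∃ c : ℝ, V x = c • x := by
  set ρ : E ≃ₗᵢ[ℝ] E := (ℝ ∙ x).reflection
  have hρx : ρ x = x :=
    Submodule.reflection_mem_subspace_eq_self (Submodule.mem_span_singleton_self x)
  have hcomp : HasFDerivAt (fun y => v (ρ y))
      ((innerSL ℝ (V x)).comp (ρ.toContinuousLinearEquiv : E →L[ℝ] E)) x :=
    HasFDerivAt.comp x (by rw [hρx]; exact hv.hasFDerivAt x hx)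
      ρ.toContinuousLinearEquiv.hasFDerivAt
  have hinv : (fun y => v (ρ y)) =ᶠ[𝓝 x] v := by
    filter_upwards [isOpen_ball.mem_nhds hx] with y hy
    exact (hrad _ _ (mem_ball_zero_iff.1 hy).le (ρ.norm_map y).symm).symm
  have hderiv : ∀ z, ⟪V x, ρ z⟫ = ⟪V x, z⟫ := fun z =>
    DFunLike.congr_fun ((hcomp.congr_of_eventuallyEq hinv.symm).unique (hv.hasFDerivAt x hx)) z
  have hfix : ρ (V x) = V x := ext_inner_right ℝ fun y => by
    rw [← ρ.inner_map_map, Submodule.reflection_reflection, hderiv]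
  obtain ⟨c, hc⟩ := Submodule.mem_span_singleton.1
    ((Submodule.reflection_eq_self_iff (V x)).1 hfix)
  exact ⟨c, hc.symm⟩

lemma HasGradientOnBall.smul_id (hm : HasGradientOnBall R m P) :
    HasFDerivOnBall R (fun x => m x • x)
      fun x => m x • .id ℝ E + (innerSL ℝ (P x)).smulRight x :=
  HasFDerivOnBall.smul hm (.of_hasFDerivAt hasFDerivAt_id continuous_const)

lemma sum_norm_sq_inner_smul_add_smul {ι : Type*} [Fintype ι] (b : OrthonormalBasis ι ℝ E)
    (p x : E) (m : ℝ) :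
    ∑ i, ‖⟪b i, x⟫ • p + m • b i‖ ^ 2 =
      ‖x‖ ^ 2 * ‖p‖ ^ 2 + 2 * m * ⟪p, x⟫ + Module.finrank ℝ E * m ^ 2 := by
  have hterm : ∀ i, ‖⟪b i, x⟫ • p + m • b i‖ ^ 2 =
      ⟪b i, x⟫ ^ 2 * ‖p‖ ^ 2 + 2 * m * (⟪p, b i⟫ * ⟪b i, x⟫) + m ^ 2 := fun i => by
    rw [norm_add_sq_real, norm_smul, norm_smul, real_inner_smul_left, real_inner_smul_right,
      b.norm_eq_one, mul_pow, mul_pow, Real.norm_eq_abs, Real.norm_eq_abs, sq_abs, sq_abs]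
    ring
  simp only [hterm, Finset.sum_add_distrib, ← Finset.mul_sum, ← Finset.sum_mul,
    b.sum_sq_inner_right, b.sum_inner_mul_inner, Finset.sum_const, Finset.card_univ,
    nsmul_eq_mul, Module.finrank_eq_card_basis b.toBasis]

variable [FiniteDimensional ℝ E]

lemma rayAverage_innerSL_comp (hV : ContinuousOn V (closedBall 0 R)) (k : ℕ) {x : E}
    (hx : x ∈ closedBall 0 R) :
    rayAverage k (fun y => innerSL ℝ (V y)) x = innerSL ℝ (rayAverage k V x) := by
  have hint := intervalIntegrable_pow_smul_comp_smul k hV hx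
  rw [rayAverage, rayAverage, ← (innerSL ℝ).intervalIntegral_comp_comm hint]
  simp

lemma hasGradientOnBall_rayAverage (hv : HasGradientOnBall R v V) (k : ℕ) :
    HasGradientOnBall R (rayAverage k v) (rayAverage (k + 1) V) := by
  have h := hv.hasFDerivOnBall_rayAverage k
  refine .mk h.continuousOn (continuousOn_rayAverage _ hv.continuousOn_gradient) fun x hx => ?_
  refine (h.hasFDerivAt x hx).congr_fderiv ?_
  exact rayAverage_innerSL_comp hv.continuousOn_gradient _ (ball_subset_closedBall hx)

lemma trace_smul_id_add_smulRight (m : ℝ) (p x : E) :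
    LinearMap.trace ℝ E (m • .id ℝ E + (innerSL ℝ p).smulRight x : E →L[ℝ] E) =
      Module.finrank ℝ E * m + ⟪p, x⟫ := by
  simp [mul_comm]

variable [MeasurableSpace E] [BorelSpace E]

theorem HasGradientOnBall.mul_integral_sq_le_of_trace_eq {W : E → E} {W' : E → E →L[ℝ] E}
    {lam : ℝ} (hv : HasGradientOnBall R v V) (hW : HasFDerivOnBall R W W') (hR : 0 < R)
    (hlam : 0 ≤ lam) (h0 : ∀ x, ‖x‖ = R → ⟪W x, x⟫ = 0)
    (hdiv : ∀ x ∈ ball 0 R, LinearMap.trace ℝ E (W' x) = v x)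
    (hle : lam * ∫ x in ball 0 R, ‖W x‖ ^ 2 ≤ ∫ x in ball 0 R, v x ^ 2) :
    lam * ∫ x in ball 0 R, v x ^ 2 ≤ ∫ x in ball 0 R, ‖V x‖ ^ 2 := by
  have hgreen : ∫ x in ball 0 R, v x ^ 2 = -∫ x in ball 0 R, ⟪V x, W x⟫ := by
    rw [← hv.integral_mul_trace_eq_neg hW hR fun x hx => by rw [h0 x hx, mul_zero]]
    exact setIntegral_congr_fun measurableSet_ball fun x hx => by rw [hdiv x hx, sq]
  have hV : IntegrableOn (fun x => ‖V x‖ ^ 2) (ball 0 R) :=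
    integrableOn_ball_norm_sq hv.continuousOn_gradient
  have hVW : IntegrableOn (fun x => 2 * lam * ⟪V x, W x⟫) (ball 0 R) :=
    integrableOn_ball_of_continuousOn
      (continuousOn_const.mul (hv.continuousOn_gradient.inner hW.continuousOn))
  have hWW : IntegrableOn (fun x => lam ^ 2 * ‖W x‖ ^ 2) (ball 0 R) :=
    (integrableOn_ball_norm_sq hW.continuousOn).const_mul _
  have hsq : 0 ≤ ∫ x in ball 0 R, (‖V x‖ ^ 2 + 2 * lam * ⟪V x, W x⟫ + lam ^ 2 * ‖W x‖ ^ 2) :=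
    integral_nonneg fun x => (sq_nonneg ‖V x + lam • W x‖).trans_eq <| by
      rw [norm_add_sq_real, norm_smul, real_inner_smul_right, mul_pow, Real.norm_eq_abs, sq_abs]
      ring
  have hadd : IntegrableOn (fun x => ‖V x‖ ^ 2 + 2 * lam * ⟪V x, W x⟫) (ball 0 R) := hV.add hVW
  rw [integral_add hadd hWW, integral_add hV hVW, integral_const_mul,
    integral_const_mul] at hsq
  nlinarith [mul_le_mul_of_nonneg_left hle hlam]

lemma HasGradientOnBall.eq_zero_of_isRadialOnBall [Nontrivial E] (hm : HasGradientOnBall R m P)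
    (hR : 0 < R) (hrad : IsRadialOnBall R m)
    (hmean : ∫ x in ball 0 R, (Module.finrank ℝ E * m x + ⟪P x, x⟫) = 0) {x : E}
    (hx : ‖x‖ = R) : m x = 0 := by
  have hid : HasFDerivOnBall R (fun y : E => y) fun _ => .id ℝ E :=
    .of_hasFDerivAt hasFDerivAt_id continuous_const
  have hconst : HasGradientOnBall R (fun _ : E => m x) fun _ => 0 :=
    .of_hasFDerivAt (fun y => (hasFDerivAt_const _ y).congr_fderiv (by simp)) (by fun_prop)
  have hgreen := (hm.sub hconst).integral_mul_trace_eq_neg hid hR fun y hy => by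
    rw [hrad x y hx.le (hx.trans hy.symm), sub_self, zero_mul]
  have htrace : LinearMap.trace ℝ E (ContinuousLinearMap.id ℝ E) = Module.finrank ℝ E :=
    LinearMap.trace_id ℝ E
  have hmint : IntegrableOn m (ball 0 R) := integrableOn_ball_of_continuousOn hm.continuousOn
  have hPint : IntegrableOn (fun y => ⟪P y, y⟫) (ball 0 R) :=
    integrableOn_ball_of_continuousOn (hm.continuousOn_gradient.inner continuousOn_id)
  have hcint : IntegrableOn (fun _ : E => m x) (ball 0 R) :=
    integrableOn_ball_of_continuousOn continuousOn_const
  simp only [htrace, sub_zero] at hgreen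
  rw [integral_mul_const, integral_sub hmint hcint, setIntegral_const, smul_eq_mul] at hgreen
  rw [integral_add (hmint.const_mul _) hPint, integral_const_mul] at hmean
  have hprod : Module.finrank ℝ E * (volume.real (ball (0 : E) R) * m x) = 0 := by linarith
  have hvol : volume.real (ball (0 : E) R) ≠ 0 :=
    (ENNReal.toReal_pos (measure_ball_pos _ _ hR).ne' measure_ball_lt_top.ne).ne'
  simpa [hvol, Module.finrank_pos.ne'] using hprod

lemma HasGradientOnBall.mul_integral_inner_mul_sq_le {lam : ℝ} (hm : HasGradientOnBall R m P)
    (hE : HasDirectionalModes E R lam) (hR : 0 < R) (hrad : IsRadialOnBall R m) {e : E}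
    (he : e ≠ 0) :
    lam * ∫ x in ball 0 R, (⟪e, x⟫ * m x) ^ 2 ≤
      ∫ x in ball 0 R, ‖⟪e, x⟫ • P x + m x • e‖ ^ 2 := by
  refine hE.mul_integral_sq_le_of_hyperplaneReflection_eq_neg hR he
    ((hasGradientOnBall_inner e).mul hm) fun x hx => ?_
  have hodd : ⟪e, hyperplaneReflection e x⟫ = -⟪e, x⟫ := by
    rw [← (hyperplaneReflection e).inner_map_map, hyperplaneReflection,
      Submodule.reflection_reflection, Submodule.reflection_orthogonalComplement_singleton_eq_neg,
      inner_neg_left]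
  rw [hodd, ← hrad x _ (mem_closedBall_zero_iff.1 hx) (LinearIsometryEquiv.norm_map _ x).symm,
    neg_mul]

lemma HasGradientOnBall.integral_sq_finrank_mul_add (hm : HasGradientOnBall R m P) (hR : 0 < R)
    (h0 : ∀ x, ‖x‖ = R → m x = 0) :
    ∫ x in ball 0 R, (Module.finrank ℝ E * m x + ⟪P x, x⟫) ^ 2 =
      ∫ x in ball 0 R,
        (⟪P x, x⟫ ^ 2 + 2 * m x * ⟪P x, x⟫ + Module.finrank ℝ E * m x ^ 2) := by
  have hgreen := hm.integral_mul_trace_eq_neg hm.smul_id hR fun x hx => by rw [h0 x hx, zero_mul]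
  simp only [trace_smul_id_add_smulRight, real_inner_smul_right] at hgreen
  have hcm := hm.continuousOn
  have hcs : ContinuousOn (fun x => ⟪P x, x⟫) (closedBall 0 R) :=
    hm.continuousOn_gradient.inner continuousOn_id
  have hint₁ : IntegrableOn (fun x => m x * (Module.finrank ℝ E * m x + ⟪P x, x⟫)) (ball 0 R) :=
    integrableOn_ball_of_continuousOn (by fun_prop)
  have hint₂ : IntegrableOn (fun x => m x * ⟪P x, x⟫) (ball 0 R) :=
    integrableOn_ball_of_continuousOn (by fun_prop)
  have hint₃ : IntegrableOn (fun x => (Module.finrank ℝ E * m x + ⟪P x, x⟫) ^ 2) (ball 0 R) :=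
    integrableOn_ball_of_continuousOn (by fun_prop)
  have hint₄ : IntegrableOn
      (fun x => ⟪P x, x⟫ ^ 2 + 2 * m x * ⟪P x, x⟫ + Module.finrank ℝ E * m x ^ 2) (ball 0 R) :=
    integrableOn_ball_of_continuousOn (by fun_prop)
  rw [← sub_eq_zero, ← integral_sub hint₃ hint₄]
  calc _ = ∫ x in ball 0 R, (Module.finrank ℝ E - 1 : ℝ) *
        (m x * (Module.finrank ℝ E * m x + ⟪P x, x⟫) + m x * ⟪P x, x⟫) :=
      integral_congr_ae (.of_forall fun x => by ring)
    _ = 0 := by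
      rw [integral_const_mul, integral_add hint₁ hint₂, hgreen, neg_add_cancel, mul_zero]

theorem HasGradientOnBall.mul_integral_norm_smul_sq_le {lam : ℝ} (hm : HasGradientOnBall R m P)
    (hE : HasDirectionalModes E R lam) (hR : 0 < R) (hrad : IsRadialOnBall R m)
    (h0 : ∀ x, ‖x‖ = R → m x = 0) :
    lam * ∫ x in ball 0 R, ‖m x • x‖ ^ 2 ≤
      ∫ x in ball 0 R, (Module.finrank ℝ E * m x + ⟪P x, x⟫) ^ 2 := by
  let b := stdOrthonormalBasis ℝ E
  have hcomp : ∀ i, HasGradientOnBall R (fun x => ⟪b i, x⟫ * m x)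
      fun x => ⟪b i, x⟫ • P x + m x • b i := fun i => (hasGradientOnBall_inner (b i)).mul hm
  have hleft : ∫ x in ball 0 R, ‖m x • x‖ ^ 2 = ∑ i, ∫ x in ball 0 R, (⟪b i, x⟫ * m x) ^ 2 := by
    have hint : ∀ i ∈ Finset.univ, IntegrableOn (fun x => (⟪b i, x⟫ * m x) ^ 2) (ball 0 R) :=
      fun i _ => integrableOn_ball_of_continuousOn ((hcomp i).continuousOn.pow 2)
    rw [← integral_finsetSum _ hint]
    refine setIntegral_congr_fun measurableSet_ball fun x _ => ?_
    simp only [mul_pow, ← Finset.sum_mul, b.sum_sq_inner_right, norm_smul, Real.norm_eq_abs,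
      sq_abs]
    ring
  have hright : ∫ x in ball 0 R, (Module.finrank ℝ E * m x + ⟪P x, x⟫) ^ 2 =
      ∑ i, ∫ x in ball 0 R, ‖⟪b i, x⟫ • P x + m x • b i‖ ^ 2 := by
    rw [hm.integral_sq_finrank_mul_add hR h0, ← integral_finsetSum _ fun i _ =>
      integrableOn_ball_norm_sq (hcomp i).continuousOn_gradient]
    refine setIntegral_congr_fun measurableSet_ball fun x hx => ?_
    obtain ⟨c, hc⟩ := hm.exists_eq_smul_of_isRadialOnBall hrad hx
    simp only [sum_norm_sq_inner_smul_add_smul, hc, norm_smul, real_inner_smul_left,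
      real_inner_self_eq_norm_sq, mul_pow, Real.norm_eq_abs, sq_abs]
    ring
  rw [hleft, hright, Finset.mul_sum]
  exact Finset.sum_le_sum fun i _ => hm.mul_integral_inner_mul_sq_le hE hR hrad
    (b.orthonormal.ne_zero i)

theorem HasGradientOnBall.mul_integral_sq_le_of_isRadialOnBall [Nontrivial E] {lam : ℝ}
    (hv : HasGradientOnBall R v V) (hE : HasDirectionalModes E R lam) (hR : 0 < R) (hlam : 0 ≤ lam)
    (hrad : IsRadialOnBall R v) (hmean : ∫ x in ball 0 R, v x = 0) :
    lam * ∫ x in ball 0 R, v x ^ 2 ≤ ∫ x in ball 0 R, ‖V x‖ ^ 2 := by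
  obtain ⟨k, hk⟩ := Nat.exists_eq_add_one.2 (Module.finrank_pos (R := ℝ) (M := E))
  have hm := hasGradientOnBall_rayAverage hv k
  have hmrad := hrad.rayAverage k
  have hdiv : ∀ x ∈ ball 0 R,
      Module.finrank ℝ E * rayAverage k v x + ⟪rayAverage (k + 1) V x, x⟫ = v x := by
    intro x hx
    have h := hv.rayAverage_add_rayAverage_apply k hx
    rw [smul_eq_mul, rayAverage_innerSL_comp hv.continuousOn_gradient _
      (ball_subset_closedBall hx)] at h
    rw [hk]
    exact_mod_cast h
  have h0 : ∀ x, ‖x‖ = R → rayAverage k v x = 0 := fun x =>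
    hm.eq_zero_of_isRadialOnBall hR hmrad
      ((setIntegral_congr_fun measurableSet_ball hdiv).trans hmean)
  refine hv.mul_integral_sq_le_of_trace_eq hm.smul_id hR hlam
    (fun x hx => by rw [h0 x hx, zero_smul, inner_zero_left])
    (fun x hx => by rw [trace_smul_id_add_smulRight, hdiv x hx]) ?_
  refine (hm.mul_integral_norm_smul_sq_le hE hR hmrad h0).trans_eq ?_
  exact setIntegral_congr_fun measurableSet_ball fun x hx => congrArg (· ^ 2) (hdiv x hx)

end Radial

section Poincare

variable {E : Type*} [NormedAddCommGroup E] [InnerProductSpace ℝ E] [FiniteDimensional ℝ E]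
  [MeasurableSpace E] [BorelSpace E] {R lam : ℝ} {u : E → ℝ} {U : E → E}

theorem HasGradientOnBall.mul_integral_sq_le [Nontrivial E] {U' : E → E →L[ℝ] E}
    (hu : HasGradientOnBall R u U) (hU : HasFDerivOnBall R U U') (hE : HasDirectionalModes E R lam)
    (hR : 0 < R) (hlam : 0 ≤ lam) (hmean : ∫ x in ball 0 R, u x = 0) :
    lam * ∫ x in ball 0 R, u x ^ 2 ≤ ∫ x in ball 0 R, ‖U x‖ ^ 2 := by
  obtain ⟨M₀, hM₀⟩ := (isCompact_closedBall (0 : E) R).exists_bound_of_continuousOn hu.continuousOn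
  obtain ⟨M₁, hM₁⟩ := (isCompact_closedBall (0 : E) R).exists_bound_of_continuousOn hU.continuousOn
  obtain ⟨K₀, hK₀⟩ := HasFDerivOnBall.exists_lipschitzOnWith hu hR.ne'
  obtain ⟨K₁, hK₁⟩ := hU.exists_lipschitzOnWith hR.ne'
  have hcomp : IsCompetitor R (max M₀ M₁) lam
      ((∫ x in ball 0 R, ‖U x‖ ^ 2) - lam * ∫ x in ball 0 R, ‖u x‖ ^ 2) (max K₀ K₁) u U :=
    { hasGradientOnBall := hu
      norm_le := fun x hx => (hM₀ x hx).trans (le_max_left _ _)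
      norm_gradient_le := fun x hx => (hM₁ x hx).trans (le_max_right _ _)
      lipschitzOnWith := hK₀.weaken (le_max_left _ _)
      lipschitzOnWith_gradient := hK₁.weaken (le_max_right _ _)
      integral_eq_zero := hmean
      energy_le := le_rfl }
  obtain ⟨w, W, hw, hmin⟩ := hcomp.exists_minimizer
  have hradial := hw.hasGradientOnBall.mul_integral_sq_le_of_isRadialOnBall hE hR hlam
    (hw.isRadialOnBall_of_minimizer hE hR hmin) hw.integral_eq_zero
  have henergy := hw.energy_le
  simp only [Real.norm_eq_abs, sq_abs] at henergy
  linarith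

theorem mul_integral_sq_le_integral_sq_and_eq_iff {l : E → ℝ} {A μ : ℝ} (hR : R ≠ 0)
    (hu : ContinuousOn u (closedBall 0 R)) (hl : ContinuousOn l (closedBall 0 R)) (hμ : 0 < μ)
    (hA : μ * ∫ x in ball 0 R, u x ^ 2 ≤ A) (hul : ∫ x in ball 0 R, u x * l x = -A) :
    ∫ x in ball 0 R, l x ^ 2 ≥ μ ^ 2 * ∫ x in ball 0 R, u x ^ 2 ∧
      (∫ x in ball 0 R, l x ^ 2 = μ ^ 2 * ∫ x in ball 0 R, u x ^ 2 ↔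
        ∀ x ∈ ball 0 R, l x = -μ * u x) := by
  have hsum : ContinuousOn (fun x => l x + μ * u x) (closedBall 0 R) := by fun_prop
  have hint₁ : IntegrableOn (fun x => l x ^ 2) (ball 0 R) :=
    integrableOn_ball_of_continuousOn (by fun_prop)
  have hint₂ : IntegrableOn (fun x => 2 * μ * (u x * l x)) (ball 0 R) :=
    integrableOn_ball_of_continuousOn (by fun_prop)
  have hint₃ : IntegrableOn (fun x => μ ^ 2 * u x ^ 2) (ball 0 R) :=
    integrableOn_ball_of_continuousOn (by fun_prop)
  have hint₁₂ : IntegrableOn (fun x => l x ^ 2 + 2 * μ * (u x * l x)) (ball 0 R) :=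
    hint₁.add hint₂
  have hexpand : ∫ x in ball 0 R, ‖l x + μ * u x‖ ^ 2 =
      (∫ x in ball 0 R, l x ^ 2) - 2 * μ * A + μ ^ 2 * ∫ x in ball 0 R, u x ^ 2 := by
    rw [sub_eq_add_neg, ← mul_neg, ← hul, ← integral_const_mul, ← integral_const_mul,
      ← integral_add hint₁ hint₂, ← integral_add hint₁₂ hint₃]
    refine integral_congr_ae (.of_forall fun x => ?_)
    simp only [Real.norm_eq_abs, sq_abs]
    ring
  have hnonneg : 0 ≤ ∫ x in ball 0 R, ‖l x + μ * u x‖ ^ 2 := integral_nonneg fun x => sq_nonneg _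
  have hAμ := mul_le_mul_of_nonneg_left hA hμ.le
  refine ⟨by linarith, fun heq x hx => ?_, fun heq => ?_⟩
  · have hzero := eq_zero_of_setIntegral_ball_norm_sq_eq_zero hR hsum
      (le_antisymm (by linarith) hnonneg) x (ball_subset_closedBall hx)
    linarith
  · rw [← integral_const_mul]
    exact setIntegral_congr_fun measurableSet_ball fun x hx => by
      simp only [heq x hx, mul_pow, neg_sq]

end Poincare

section Regularity

variable {E F : Type*} [NormedAddCommGroup E] [NormedSpace ℝ E] [NormedAddCommGroup F]
  [NormedSpace ℝ F] {R : ℝ} {f : E → F}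

lemma uniqueDiffOn_closedBall_zero (hR : 0 < R) : UniqueDiffOn ℝ (closedBall (0 : E) R) :=
  uniqueDiffOn_convex (convex_closedBall _ _) <| by
    rw [interior_closedBall _ hR.ne', nonempty_ball]
    exact hR

lemma hasFDerivOnBall_fderivWithin (hf : ContDiffOn ℝ 1 f (closedBall 0 R)) (hR : 0 < R) :
    HasFDerivOnBall R f (fderivWithin ℝ f (closedBall 0 R)) where
  continuousOn := hf.continuousOn
  continuousOn_deriv := hf.continuousOn_fderivWithin (uniqueDiffOn_closedBall_zero hR) le_rfl
  hasFDerivAt x hx :=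
    (hf.differentiableOn one_ne_zero x (ball_subset_closedBall hx)).hasFDerivWithinAt.hasFDerivAt
      (mem_of_superset (isOpen_ball.mem_nhds hx) ball_subset_closedBall)

end Regularity

section Gradient

variable {E : Type*} [NormedAddCommGroup E] [InnerProductSpace ℝ E] [CompleteSpace E] {R : ℝ}
  {u : E → ℝ} {U : E → E}

lemma innerSL_gradientWithin (s : Set E) (x : E) :
    innerSL ℝ (gradientWithin u s x) = fderivWithin ℝ u s x :=
  toDual_gradientWithin

lemma hasGradientOnBall_gradientWithin (hu : ContDiffOn ℝ 1 u (closedBall 0 R)) (hR : 0 < R) :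
    HasGradientOnBall R u (gradientWithin u (closedBall 0 R)) := by
  simpa only [HasGradientOnBall, innerSL_gradientWithin] using hasFDerivOnBall_fderivWithin hu hR

lemma contDiffOn_gradientWithin (hu : ContDiffOn ℝ 2 u (closedBall 0 R)) (hR : 0 < R) :
    ContDiffOn ℝ 1 (gradientWithin u (closedBall 0 R)) (closedBall 0 R) :=
  (InnerProductSpace.toDual ℝ E).symm.contDiff.comp_contDiffOn
    (hu.fderivWithin (uniqueDiffOn_closedBall_zero hR) one_add_one_eq_two.le)

lemma HasGradientOnBall.eqOn_gradientWithin (hU : HasGradientOnBall R u U)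
    (hu : ContDiffOn ℝ 1 u (closedBall 0 R)) (hR : 0 < R) :
    EqOn (gradientWithin u (closedBall 0 R)) U (closedBall 0 R) := by
  have hgrad := hasGradientOnBall_gradientWithin hu hR
  have hball : EqOn (gradientWithin u (closedBall 0 R)) U (ball 0 R) := fun x hx =>
    (InnerProductSpace.toDual ℝ E).injective
      ((hgrad.hasFDerivAt x hx).unique (hU.hasFDerivAt x hx))
  exact hball.of_subset_closure hgrad.continuousOn_gradient hU.continuousOn_gradient
    ball_subset_closedBall (closure_ball (0 : E) hR.ne').ge

end Gradient

section Laplacian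

variable {n : ℕ} {R lam : ℝ} {u : EuclideanSpace ℝ (Fin n) → ℝ}

lemma lapWithin_eq_trace {s : Set (EuclideanSpace ℝ (Fin n))}
    {U : EuclideanSpace ℝ (Fin n) → EuclideanSpace ℝ (Fin n)} {x : EuclideanSpace ℝ (Fin n)}
    {A : EuclideanSpace ℝ (Fin n) →L[ℝ] EuclideanSpace ℝ (Fin n)}
    (hgrad : EqOn (gradientWithin u s) U s) (hU : HasFDerivWithinAt U A s x)
    (hs : UniqueDiffWithinAt ℝ s x) (hx : x ∈ s) :
    lapWithin s u x = LinearMap.trace ℝ (EuclideanSpace ℝ (Fin n)) A := by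
  rw [LinearMap.trace_eq_sum_inner _ (EuclideanSpace.basisFun (Fin n) ℝ), lapWithin]
  refine Finset.sum_congr rfl fun i _ => ?_
  have hpartial : EqOn (fun y => fderivWithin ℝ u s y (EuclideanSpace.single i 1))
      (fun y => innerSL ℝ (EuclideanSpace.single i 1) (U y)) s := fun y hy => by
    simp only [← hgrad hy, innerSL_apply_apply, ← inner_gradientWithin_left, real_inner_comm]
  have hderiv : HasFDerivWithinAt (fun y => innerSL ℝ (EuclideanSpace.single i 1) (U y))
      ((innerSL ℝ (EuclideanSpace.single i 1)).comp A) s x :=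
    (innerSL ℝ (EuclideanSpace.single i (1 : ℝ))).hasFDerivAt.comp_hasFDerivWithinAt x hU
  rw [fderivWithin_congr hpartial (hpartial hx), hderiv.fderivWithin hs]
  simp

lemma lapWithin_eq_trace_fderivWithin (hu : ContDiffOn ℝ 2 u (closedBall 0 R)) (hR : 0 < R)
    {x : EuclideanSpace ℝ (Fin n)} (hx : x ∈ closedBall 0 R) :
    lapWithin (closedBall 0 R) u x = LinearMap.trace ℝ (EuclideanSpace ℝ (Fin n))
      (fderivWithin ℝ (gradientWithin u (closedBall 0 R)) (closedBall 0 R) x) :=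
  lapWithin_eq_trace (eqOn_refl _ _)
    ((contDiffOn_gradientWithin hu hR).differentiableOn one_ne_zero x hx).hasFDerivWithinAt
    (uniqueDiffOn_closedBall_zero hR x hx) hx

lemma continuousOn_lapWithin (hu : ContDiffOn ℝ 2 u (closedBall 0 R)) (hR : 0 < R) :
    ContinuousOn (lapWithin (closedBall 0 R) u) (closedBall 0 R) :=
  (continuousOn_trace (hasFDerivOnBall_fderivWithin (contDiffOn_gradientWithin hu hR)
    hR).continuousOn_deriv).congr fun _ hx => lapWithin_eq_trace_fderivWithin hu hR hx

theorem integral_mul_lapWithin_eq_neg (hu : ContDiffOn ℝ 2 u (closedBall 0 R)) (hR : 0 < R)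
    (hbd : ∀ x, ‖x‖ = R → fderivWithin ℝ u (closedBall 0 R) x (‖x‖⁻¹ • x) = 0) :
    ∫ x in ball 0 R, u x * lapWithin (closedBall 0 R) u x =
      -∫ x in ball 0 R, ‖gradientWithin u (closedBall 0 R) x‖ ^ 2 := by
  have hnormal : ∀ x, ‖x‖ = R → u x * ⟪gradientWithin u (closedBall 0 R) x, x⟫ = 0 :=
    fun x hx => by
      have hflux := hbd x hx
      rw [map_smul, smul_eq_mul, hx, mul_eq_zero_iff_left (inv_ne_zero hR.ne')] at hflux
      rw [inner_gradientWithin_left, hflux, mul_zero]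
  simp only [← real_inner_self_eq_norm_sq]
  rw [← (hasGradientOnBall_gradientWithin (hu.of_le one_le_two) hR).integral_mul_trace_eq_neg
    (hasFDerivOnBall_fderivWithin (contDiffOn_gradientWithin hu hR) hR) hR hnormal]
  exact setIntegral_congr_fun measurableSet_ball fun x hx => by
    rw [lapWithin_eq_trace_fderivWithin hu hR (ball_subset_closedBall hx)]

theorem HasDirectionalModes.isLapNeumannEigenvalueBall [Nontrivial (EuclideanSpace ℝ (Fin n))]
    (hE : HasDirectionalModes (EuclideanSpace ℝ (Fin n)) R lam) (hR : 0 < R) :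
    IsLapNeumannEigenvalueBall n R lam := by
  obtain ⟨e, he⟩ := exists_norm_eq (EuclideanSpace ℝ (Fin n)) hR.le
  obtain ⟨φ, hφ, ⟨G, H, hmode⟩, c, hc, hle⟩ := hE e
  have hgrad := hmode.hasGradientOnBall.eqOn_gradientWithin (hφ.contDiffOn.of_le (by simp)) hR
  have heball : e ∈ closedBall 0 R := mem_closedBall_zero_iff.2 he.le
  refine ⟨φ, hφ.contDiffOn, ⟨e, heball, fun h0 => ?_⟩, fun x hx => ?_, fun x hx => ?_⟩
  · have hpos : 0 < c * |⟪e, e⟫| := by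
      rw [real_inner_self_eq_norm_sq, he]
      positivity
    exact absurd (hpos.trans_le (hle e heball)) (by simp [h0])
  · have hxc := ball_subset_closedBall hx
    rw [lapWithin_eq_trace hgrad (hmode.hasFDerivOnBall.hasFDerivAt x hx).hasFDerivWithinAt
      (uniqueDiffOn_closedBall_zero hR x hxc) hxc, hmode.trace_eq x hx]
  · rw [map_smul, ← inner_gradientWithin_left, hgrad (mem_closedBall_zero_iff.2 hx.le),
      hmode.inner_eq_zero x hx, smul_zero]

lemma IsLapNeumannEigenvalueBall.nontrivial {μ : ℝ} (h : IsLapNeumannEigenvalueBall n R μ)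
    (hR : 0 < R) (hμ : μ ≠ 0) : Nontrivial (EuclideanSpace ℝ (Fin n)) := by
  obtain ⟨u, -, ⟨x, -, hux⟩, hlap, -⟩ := h
  by_contra htriv
  rw [not_nontrivial_iff_subsingleton] at htriv
  have hzero := hlap x (by simpa [Subsingleton.elim x 0] using hR)
  simp [lapWithin, Subsingleton.elim (EuclideanSpace.single _ (1 : ℝ)) 0, hμ, hux] at hzero

theorem biharmonic_rayleigh_bound_ball_general (R : ℝ) (hR : 0 < R) (μ₁ : ℝ)
    (hμ : IsLeast {μ : ℝ | 0 < μ ∧ IsLapNeumannEigenvalueBall n R μ} μ₁)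
    (u : EuclideanSpace ℝ (Fin n) → ℝ)
    (hu_smooth : ContDiffOn ℝ 2 u (closedBall 0 R))
    (hu_mean : (∫ x in ball (0 : EuclideanSpace ℝ (Fin n)) R, u x) = 0)
    (hu_bd : ∀ x : EuclideanSpace ℝ (Fin n), ‖x‖ = R →
      fderivWithin ℝ u (closedBall 0 R) x (‖x‖⁻¹ • x) = 0) :
    (∫ x in ball (0 : EuclideanSpace ℝ (Fin n)) R, (lapWithin (closedBall 0 R) u x) ^ 2) ≥
      μ₁ ^ 2 * ∫ x in ball (0 : EuclideanSpace ℝ (Fin n)) R, (u x) ^ 2 ∧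
    ((∫ x in ball (0 : EuclideanSpace ℝ (Fin n)) R, (lapWithin (closedBall 0 R) u x) ^ 2) =
        μ₁ ^ 2 * (∫ x in ball (0 : EuclideanSpace ℝ (Fin n)) R, (u x) ^ 2) ↔
      ∀ x ∈ ball (0 : EuclideanSpace ℝ (Fin n)) R,
        lapWithin (closedBall 0 R) u x = -μ₁ * u x) := by
  obtain ⟨hμpos, hμeig⟩ := hμ.1
  have := hμeig.nontrivial hR hμpos.ne'
  obtain ⟨lam, hlam, hE⟩ := exists_hasDirectionalModes (EuclideanSpace ℝ (Fin n)) hR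
  have hμlam : μ₁ ≤ lam := hμ.2 ⟨hlam, hE.isLapNeumannEigenvalueBall hR⟩
  have hpoincare := (hasGradientOnBall_gradientWithin (hu_smooth.of_le one_le_two)
    hR).mul_integral_sq_le (hasFDerivOnBall_fderivWithin (contDiffOn_gradientWithin hu_smooth hR)
      hR) hE hR hlam.le hu_mean
  exact mul_integral_sq_le_integral_sq_and_eq_iff hR.ne' hu_smooth.continuousOn
    (continuousOn_lapWithin hu_smooth hR) hμpos
    ((mul_le_mul_of_nonneg_right hμlam (integral_nonneg fun x => sq_nonneg _)).trans hpoincare)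
    (integral_mul_lapWithin_eq_neg hu_smooth hR hu_bd)

end Laplacian

/-- **Rayleigh-quotient lower bound on a ball for `Δ²` with Neumann conditions.**
Let `n ≥ 2`, `R > 0`, and let `u` be smooth on the closed ball `B_R(0) ⊂ ℝⁿ` with
`∫_{B_R(0)} u = 0` and `∂u/∂n = ∂(Δu)/∂n = 0` on the boundary sphere. Then
`∫ |Δu|² ≥ μ₁(B_R(0))² ∫ |u|²`, with equality iff `Δu = −μ₁(B_R(0))·u` in the ball. -/
theorem biharmonic_rayleigh_bound_ball {n : ℕ} (hn : 2 ≤ n) (R : ℝ) (hR : 0 < R) (μ₁ : ℝ)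
    (hμ : IsLeast {μ : ℝ | 0 < μ ∧ IsLapNeumannEigenvalueBall n R μ} μ₁)
    (u : EuclideanSpace ℝ (Fin n) → ℝ)
    (hu_smooth : ContDiffOn ℝ (⊤ : ℕ∞) u (closedBall 0 R))
    (hu_mean : (∫ x in ball (0 : EuclideanSpace ℝ (Fin n)) R, u x) = 0)
    (hu_bd : ∀ x : EuclideanSpace ℝ (Fin n), ‖x‖ = R →
      fderivWithin ℝ u (closedBall 0 R) x (‖x‖⁻¹ • x) = 0)
    (hu_bd' : ∀ x : EuclideanSpace ℝ (Fin n), ‖x‖ = R →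
      fderivWithin ℝ (lapWithin (closedBall 0 R) u) (closedBall 0 R) x (‖x‖⁻¹ • x) = 0) :
    (∫ x in ball (0 : EuclideanSpace ℝ (Fin n)) R, (lapWithin (closedBall 0 R) u x) ^ 2) ≥
      μ₁ ^ 2 * ∫ x in ball (0 : EuclideanSpace ℝ (Fin n)) R, (u x) ^ 2 ∧
    ((∫ x in ball (0 : EuclideanSpace ℝ (Fin n)) R, (lapWithin (closedBall 0 R) u x) ^ 2) =
        μ₁ ^ 2 * (∫ x in ball (0 : EuclideanSpace ℝ (Fin n)) R, (u x) ^ 2) ↔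
      ∀ x ∈ ball (0 : EuclideanSpace ℝ (Fin n)) R,
        lapWithin (closedBall 0 R) u x = -μ₁ * u x) :=
  biharmonic_rayleigh_bound_ball_general R hR μ₁ hμ u
    (hu_smooth.of_le (WithTop.coe_le_coe.2 le_top)) hu_mean hu_bd
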